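/- arXiv:2309.07744 — 3 statements merged into one kernel-verified Lean document; each statement's English description precedes it below -/
import Mathlib

section
/- For every integer d ≥ 2 there exist a constant c > 0 and a threshold Q such that for every prime power q ≥ Q and every real number k with 4d·q^{d−2} ≤ k ≤ q^{d−1−1/d}, there is a collection 𝒞 of subsets (containers) of 𝔽_q^d satisfying: (i) every general position subset of 𝔽_q^d is contained in some member of 𝒞; (ii) |C| ≤ kq for every C ∈ 𝒞; and (iii) |𝒞| ≤ 2^{c · k^{−1} · q^{d−1} · (log q)²}, where log is base 2. -/
/-- A set `P ⊆ 𝔽_q^d` is in general position if every `(d+1)`-element subset of `P`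
is affinely independent. -/
def IsGenPos (F : Type*) [Field F] (d : ℕ) (P : Set (Fin d → F)) : Prop :=
  ∀ s : Finset (Fin d → F), (↑s : Set (Fin d → F)) ⊆ P → s.card = d + 1 →
    AffineIndependent F ((↑) : s → (Fin d → F))

/-! The proof combines a fingerprint with the Kleitman–Winston graph container argument. Fix `s`
points `S` of a general position set `P` and `L` subsets `T ⊆ S` of size `d - 1`. For each `T`
choose a pencil of `q + 1` hyperplanes that contain `T` and together cover the space, and join two
points when some pencil has a hyperplane containing both. Joined points and `T` would be `d + 1`
points of `P` on a hyperplane, so `P \ S` is independent. Two distinct hyperplanes meet in at most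
`q ^ (d - 2)` points, so by inclusion–exclusion a set of more than `4 L q ^ (d - 1)` points always
has a vertex joined to a proportion `L / (6 q)` of it, as long as one discards the points that lie
on a hyperplane through `d` points of `S`, which `P \ S` avoids. -/

open Finset Module

section Containers

variable {V ι : Type*} {p p₁ p₂ : Set V → Prop} {M M' N N' N₁ N₂ : ℝ}

/-- The sets satisfying `p` admit a collection of at most `N` containers, each of size at most
`M`. The bounds are real because `M` and `N` are real expressions in the applications. -/
def HasContainers (p : Set V → Prop) (M N : ℝ) : Prop :=
  ∃ 𝒞 : Finset (Finset V),
    (∀ P, p P → ∃ C ∈ 𝒞, P ⊆ ↑C) ∧ (∀ C ∈ 𝒞, (#C : ℝ) ≤ M) ∧ (#𝒞 : ℝ) ≤ N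

namespace HasContainers

theorem singleton {A : Finset V} (hA : ∀ P, p P → P ⊆ ↑A) (hM : #A ≤ M) :
    HasContainers p M 1 :=
  ⟨{A}, fun P hP ↦ ⟨A, mem_singleton_self A, hA P hP⟩, by simpa using hM, by simp⟩

theorem mono (h : HasContainers p₁ M N) (hp : ∀ P, p₂ P → p₁ P) (hM : M ≤ M') (hN : N ≤ N') :
    HasContainers p₂ M' N' := by
  obtain ⟨𝒞, hcover, hsize, hcard⟩ := h
  exact ⟨𝒞, fun P hP ↦ hcover P (hp P hP), fun C hC ↦ (hsize C hC).trans hM, hcard.trans hN⟩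

theorem or (h₁ : HasContainers p₁ M N₁) (h₂ : HasContainers p₂ M N₂) :
    HasContainers (fun P ↦ p₁ P ∨ p₂ P) M (N₁ + N₂) := by
  classical
  obtain ⟨𝒞₁, hcover₁, hsize₁, hcard₁⟩ := h₁
  obtain ⟨𝒞₂, hcover₂, hsize₂, hcard₂⟩ := h₂
  refine ⟨𝒞₁ ∪ 𝒞₂, ?_, ?_, ?_⟩
  · rintro P (hP | hP)
    · obtain ⟨C, hC, hPC⟩ := hcover₁ P hP
      exact ⟨C, mem_union_left _ hC, hPC⟩
    · obtain ⟨C, hC, hPC⟩ := hcover₂ P hP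
      exact ⟨C, mem_union_right _ hC, hPC⟩
  · intro C hC
    exact (mem_union.1 hC).elim (hsize₁ C) (hsize₂ C)
  · have hunion : (#(𝒞₁ ∪ 𝒞₂) : ℝ) ≤ #𝒞₁ + #𝒞₂ := mod_cast card_union_le 𝒞₁ 𝒞₂
    linarith

theorem biUnion {r : ι → Set V → Prop} {s : Finset ι} (h : ∀ i ∈ s, HasContainers (r i) M N) :
    HasContainers (fun P ↦ ∃ i ∈ s, r i P) M (#s * N) := by
  classical
  choose! 𝒞 hcover hsize hcard using h
  refine ⟨s.biUnion 𝒞, ?_, ?_, ?_⟩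
  · rintro P ⟨i, hi, hP⟩
    obtain ⟨C, hC, hPC⟩ := hcover i hi P hP
    exact ⟨C, mem_biUnion.2 ⟨i, hi, hC⟩, hPC⟩
  · intro C hC
    obtain ⟨i, hi, hC⟩ := mem_biUnion.1 hC
    exact hsize i hi C hC
  · calc (#(s.biUnion 𝒞) : ℝ) ≤ ∑ i ∈ s, (#(𝒞 i) : ℝ) := mod_cast card_biUnion_le
      _ ≤ ∑ _i ∈ s, N := sum_le_sum hcard
      _ = #s * N := by rw [sum_const, nsmul_eq_mul]

theorem of_sdiff (S : Finset V) (h : HasContainers p M N) :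
    HasContainers (fun P ↦ p (P \ ↑S)) (M + #S) N := by
  classical
  obtain ⟨𝒞, hcover, hsize, hcard⟩ := h
  refine ⟨𝒞.image (· ∪ S), ?_, ?_, ?_⟩
  · intro P hP
    obtain ⟨C, hC, hPC⟩ := hcover _ hP
    refine ⟨C ∪ S, mem_image_of_mem _ hC, ?_⟩
    rwa [coe_union, Set.union_comm, ← Set.sdiff_subset_iff]
  · intro C' hC'
    obtain ⟨C, hC, rfl⟩ := mem_image.1 hC'
    have hunion : (#(C ∪ S) : ℝ) ≤ #C + #S := mod_cast card_union_le C S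
    linarith [hsize C hC]
  · exact le_trans (mod_cast card_image_le) hcard

end HasContainers

variable {G : SimpleGraph V} [DecidableRel G.Adj] {A A₀ : Finset V}

-- An independent set either avoids `x` or avoids all neighbours of `x`.
theorem HasContainers.isIndepSet_of_erase [DecidableEq V] {x : V}
    (h₁ : HasContainers (fun I ↦ I ⊆ ↑(A.erase x) ∧ G.IsIndepSet I) M N₁)
    (h₂ : HasContainers (fun I ↦ I ⊆ ↑{y ∈ A | ¬ G.Adj x y} ∧ G.IsIndepSet I) M N₂) :
    HasContainers (fun I ↦ I ⊆ ↑A ∧ G.IsIndepSet I) M (N₁ + N₂) := by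
  refine (h₁.or h₂).mono ?_ le_rfl le_rfl
  rintro I ⟨hIA, hI⟩
  by_cases hx : x ∈ I
  · refine Or.inr ⟨fun y hy ↦ mem_coe.2 (mem_filter.2 ⟨hIA hy, fun hxy ↦ ?_⟩), hI⟩
    exact hI hx hy hxy.ne hxy
  · refine Or.inl ⟨?_, hI⟩
    rw [coe_erase]
    exact Set.subset_sdiff_singleton hIA hx

variable {β : ℝ}

theorem hasContainers_isIndepSet_of_card_filter_not_adj {K : ℝ} (hK : 1 ≤ K)
    (h : ∀ B ⊆ A₀, M < #B →
      ∃ x ∈ B, HasContainers (fun I ↦ I ⊆ ↑{y ∈ B | ¬ G.Adj x y} ∧ G.IsIndepSet I) M K) :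
    HasContainers (fun I ↦ I ⊆ ↑A₀ ∧ G.IsIndepSet I) M ((#A₀ + 1) * K) := by
  classical
  induction A₀ using Finset.strongInduction with
  | H A ih =>
    by_cases hAM : (#A : ℝ) ≤ M
    · refine (HasContainers.singleton (fun I hI ↦ hI.1) hAM).mono (fun I hI ↦ hI) le_rfl ?_
      nlinarith [Nat.cast_nonneg (α := ℝ) #A]
    obtain ⟨x, hx, hnot⟩ := h A subset_rfl (not_le.1 hAM)
    have herase := ih _ (erase_ssubset hx) fun B hB ↦ h B (hB.trans (erase_subset x A))
    refine (herase.isIndepSet_of_erase hnot).mono (fun I hI ↦ hI) le_rfl (le_of_eq ?_)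
    rw [cast_card_erase_of_mem hx]
    ring

theorem hasContainers_isIndepSet_of_le_degree {N : ℕ} (hβ : β ≤ 1) (hN : #A₀ < N)
    (hdeg : ∀ B ⊆ A₀, M < #B → ∃ x ∈ B, β * #B ≤ #{y ∈ B | G.Adj x y})
    (n : ℕ) (hA : A ⊆ A₀) (hAM : (1 - β) ^ n * #A ≤ M) :
    HasContainers (fun I ↦ I ⊆ ↑A ∧ G.IsIndepSet I) M (N ^ n) := by
  have hβ0 : 0 ≤ 1 - β := sub_nonneg.2 hβ
  induction n generalizing A with
  | zero =>
    rw [pow_zero]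
    exact HasContainers.singleton (fun I hI ↦ hI.1) (by simpa using hAM)
  | succ n ih =>
    have hN1 : (1 : ℝ) ≤ N := mod_cast (Nat.zero_le _).trans_lt hN
    have hstep : ∀ B ⊆ A, M < #B → ∃ x ∈ B,
        HasContainers (fun I ↦ I ⊆ ↑{y ∈ B | ¬ G.Adj x y} ∧ G.IsIndepSet I) M (N ^ n) := by
      intro B hB hBM
      obtain ⟨x, hx, hxdeg⟩ := hdeg B (hB.trans hA) hBM
      refine ⟨x, hx, ih ((filter_subset _ _).trans (hB.trans hA)) ?_⟩
      have hsplit : (#{y ∈ B | G.Adj x y} : ℝ) + #{y ∈ B | ¬ G.Adj x y} = #B :=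
        mod_cast card_filter_add_card_filter_not (s := B) (G.Adj x)
      calc (1 - β) ^ n * #{y ∈ B | ¬ G.Adj x y} ≤ (1 - β) ^ n * ((1 - β) * #A) := by
            have hBA : (#B : ℝ) ≤ #A := mod_cast card_le_card hB
            exact mul_le_mul_of_nonneg_left (by nlinarith) (pow_nonneg hβ0 n)
        _ = (1 - β) ^ (n + 1) * #A := by ring
        _ ≤ M := hAM
    refine (hasContainers_isIndepSet_of_card_filter_not_adj (one_le_pow₀ hN1) hstep).mono
      (fun I hI ↦ hI) le_rfl ?_
    have hAN : (#A : ℝ) + 1 ≤ N := mod_cast (card_le_card hA).trans_lt hN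
    rw [pow_succ']
    gcongr

end Containers

section Coincidence

variable {V K ι : Type*} [DecidableEq K]

theorem card_sq_le_card_image_mul_sum_card_fiber (κ : V → K) (B : Finset V) :
    #B ^ 2 ≤ #(B.image κ) * ∑ x ∈ B, #{y ∈ B | κ y = κ x} := by
  have hfiber : ∑ x ∈ B, #{y ∈ B | κ y = κ x} = ∑ o ∈ B.image κ, #{y ∈ B | κ y = o} ^ 2 := by
    rw [← sum_fiberwise_of_maps_to fun x hx ↦ mem_image_of_mem κ hx]
    refine sum_congr rfl fun o _ ↦ ?_
    rw [sum_congr rfl fun x hx ↦ by rw [(mem_filter.1 hx).2], sum_const, smul_eq_mul, sq]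
  rw [hfiber]
  nth_rw 1 [card_eq_sum_card_image κ B]
  exact sq_sum_le_card_mul_sum_sq

theorem sum_card_le_card_biUnion_add [DecidableEq V] {𝒯 : Finset ι} {A : ι → Finset V} {D : ℕ}
    (h : (𝒯 : Set ι).Pairwise fun i j ↦ #(A i ∩ A j) ≤ D) :
    ∑ i ∈ 𝒯, #(A i) ≤ #(𝒯.biUnion A) + #𝒯 ^ 2 * D := by
  classical
  induction 𝒯 using Finset.induction_on with
  | empty => simp
  | insert i 𝒯 hi ih =>
    have hinter : #(A i ∩ 𝒯.biUnion A) ≤ #𝒯 * D := by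
      rw [inter_biUnion]
      refine card_biUnion_le_card_mul _ _ _ fun j hj ↦ ?_
      exact h (mem_insert_self i 𝒯) (mem_insert_of_mem hj) fun hij ↦ hi (hij ▸ hj)
    have hunion := card_union_add_card_inter (A i) (𝒯.biUnion A)
    have ih := ih (h.mono (by simp))
    rw [sum_insert hi, biUnion_insert, card_insert_of_notMem hi]
    nlinarith

theorem exists_card_mul_card_le_of_coincidences {𝒯 : Finset ι} {κ : ι → V → K} {B : Finset V}
    {m D : ℕ} (hB : B.Nonempty) (hm : ∀ i ∈ 𝒯, #(B.image (κ i)) ≤ m)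
    (hD : ∀ x ∈ B, (𝒯 : Set ι).Pairwise fun i j ↦
      #{y ∈ B | κ i y = κ i x ∧ κ j y = κ j x} ≤ D) :
    ∃ x ∈ B, #𝒯 * #B ≤ m * (#{y ∈ B | ∃ i ∈ 𝒯, κ i y = κ i x} + #𝒯 ^ 2 * D) := by
  have hunion : ∀ x ∈ B, ∑ i ∈ 𝒯, #{y ∈ B | κ i y = κ i x} ≤
      #{y ∈ B | ∃ i ∈ 𝒯, κ i y = κ i x} + #𝒯 ^ 2 * D := by
    classical
    intro x hx
    have hbiUnion : (𝒯.biUnion fun i ↦ {y ∈ B | κ i y = κ i x}) =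
        {y ∈ B | ∃ i ∈ 𝒯, κ i y = κ i x} := by
      ext y
      simp only [mem_biUnion, mem_filter]
      tauto
    rw [← hbiUnion]
    refine sum_card_le_card_biUnion_add fun i hi j hj hij ↦ ?_
    simpa only [filter_and] using hD x hx hi hj hij
  refine exists_le_of_sum_le hB ?_
  calc ∑ _x ∈ B, #𝒯 * #B = ∑ _i ∈ 𝒯, #B ^ 2 := by
        simp only [sum_const, smul_eq_mul]
        ring
    _ ≤ ∑ i ∈ 𝒯, m * ∑ x ∈ B, #{y ∈ B | κ i y = κ i x} :=
        sum_le_sum fun i hi ↦ (card_sq_le_card_image_mul_sum_card_fiber (κ i) B).trans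
          (Nat.mul_le_mul_right _ (hm i hi))
    _ = ∑ x ∈ B, m * ∑ i ∈ 𝒯, #{y ∈ B | κ i y = κ i x} := by
        rw [← mul_sum, ← mul_sum, sum_comm]
    _ ≤ ∑ x ∈ B, m * (#{y ∈ B | ∃ i ∈ 𝒯, κ i y = κ i x} + #𝒯 ^ 2 * D) :=
        sum_le_sum fun x hx ↦ Nat.mul_le_mul_left m (hunion x hx)

/-- The graph joining two distinct points when some `κ i` with `i ∈ 𝒯` takes the same value at
both; in the application `κ i` sends a point to the hyperplane of the `i`-th pencil through it. -/
def coincidenceGraph (𝒯 : Finset ι) (κ : ι → V → K) : SimpleGraph V where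
  Adj x y := x ≠ y ∧ ∃ i ∈ 𝒯, κ i y = κ i x
  symm := ⟨fun _ _ ⟨hne, i, hi, h⟩ ↦ ⟨hne.symm, i, hi, h.symm⟩⟩

theorem card_coincidences_le_card_adj_add_one (𝒯 : Finset ι) (κ : ι → V → K) (B : Finset V) (x : V)
    [DecidableRel (coincidenceGraph 𝒯 κ).Adj] :
    #{y ∈ B | ∃ i ∈ 𝒯, κ i y = κ i x} ≤ #{y ∈ B | (coincidenceGraph 𝒯 κ).Adj x y} + 1 := by
  classical
  refine (card_le_card fun y hy ↦ ?_).trans (card_insert_le x _)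
  obtain ⟨hyB, hcoinc⟩ := mem_filter.1 hy
  obtain rfl | hyx := eq_or_ne y x
  · exact mem_insert_self y _
  · exact mem_insert_of_mem (mem_filter.2 ⟨hyB, hyx.symm, hcoinc⟩)

end Coincidence

section Estimates

theorem div_mul_le_of_mul_le_add {l q D b w : ℝ} (hl : 1 ≤ l) (hq : 2 ≤ q) (hD : 1 ≤ D)
    (hb : 4 * l * (q * D) ≤ b) (h : l * b ≤ (q + 1) * (w + 1 + l ^ 2 * D)) :
    l / (6 * q) * b ≤ w := by
  have hlD : 1 ≤ l * D := one_le_mul_of_one_le_of_one_le hl hD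
  have hqb : 4 * q ≤ b := by nlinarith
  have hloss₁ : 4 * q ≤ l * b := by nlinarith
  have hloss₂ : 4 * q * (l ^ 2 * D) ≤ l * b := by nlinarith
  have hpos : 0 ≤ w + 1 + l ^ 2 * D := by
    by_contra! hneg
    nlinarith
  have hmain : l * b ≤ 3 / 2 * q * (w + 1 + l ^ 2 * D) :=
    h.trans (mul_le_mul_of_nonneg_right (by linarith) hpos)
  rw [div_mul_eq_mul_div, div_le_iff₀ (by positivity)]
  linarith

theorem pow_le_choose_mul (r a : ℕ) : a ^ r ≤ (r * a).choose r := by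
  induction r with
  | zero => simp
  | succ r ih =>
    have hmem : (r, 1) ∈ antidiagonal (r + 1) := mem_antidiagonal.2 rfl
    calc a ^ (r + 1) ≤ (r * a).choose r * a.choose 1 := by
          rw [pow_succ, Nat.choose_one_right]
          gcongr
      _ ≤ ((r + 1) * a).choose (r + 1) := by
          rw [add_one_mul, Nat.add_choose_eq]
          exact single_le_sum (f := fun ij : ℕ × ℕ ↦ (r * a).choose ij.1 * a.choose ij.2)
            (fun _ _ ↦ Nat.zero_le _) hmem

theorem exists_le_choose_and_le_two_mul {r L : ℕ} {t : ℝ} (ht : 1 ≤ t) (hL : (L : ℝ) ≤ t ^ r) :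
    ∃ s : ℕ, L ≤ s.choose r ∧ (s : ℝ) ≤ 2 * r * t := by
  have hceil : (⌈t⌉₊ : ℝ) ≤ 2 * t := by
    linarith [Nat.ceil_lt_add_one (zero_le_one.trans ht)]
  refine ⟨r * ⌈t⌉₊, le_trans ?_ (pow_le_choose_mul r ⌈t⌉₊), ?_⟩
  · have hpow : t ^ r ≤ (⌈t⌉₊ : ℝ) ^ r := by
      gcongr
      exact Nat.le_ceil t
    exact_mod_cast hL.trans hpow
  · push_cast
    linarith [mul_le_mul_of_nonneg_left hceil (Nat.cast_nonneg (α := ℝ) r)]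

theorem exists_nat_le_and_le_two_mul {x : ℝ} (hx : 1 ≤ x) :
    ∃ L : ℕ, 1 ≤ L ∧ (L : ℝ) ≤ x ∧ x ≤ 2 * L := by
  have hfloor : 1 ≤ ⌊x⌋₊ := Nat.le_floor (mod_cast hx)
  have hfloor' : (1 : ℝ) ≤ ⌊x⌋₊ := mod_cast hfloor
  exact ⟨⌊x⌋₊, hfloor, Nat.floor_le (by linarith), by linarith [Nat.lt_floor_add_one x]⟩

theorem exists_one_sub_pow_mul_le_one {β x : ℝ} (hβ : 0 < β) (hβ' : β ≤ 1) (hx : 1 ≤ x) :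
    ∃ n : ℕ, (n : ℝ) ≤ Real.log x / β + 1 ∧ (1 - β) ^ n * x ≤ 1 := by
  have hdiv : 0 ≤ Real.log x / β := div_nonneg (Real.log_nonneg hx) hβ.le
  have hlog : Real.log x ≤ ⌈Real.log x / β⌉₊ * β := (div_le_iff₀ hβ).1 (Nat.le_ceil _)
  refine ⟨⌈Real.log x / β⌉₊, (Nat.ceil_lt_add_one hdiv).le, ?_⟩
  have hβ0 : 0 ≤ 1 - β := sub_nonneg.2 hβ'
  calc (1 - β) ^ ⌈Real.log x / β⌉₊ * x
      ≤ Real.exp (-β) ^ ⌈Real.log x / β⌉₊ * Real.exp (Real.log x) := by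
        rw [Real.exp_log (zero_lt_one.trans_le hx)]
        exact mul_le_mul_of_nonneg_right
          (pow_le_pow_left₀ hβ0 (Real.one_sub_le_exp_neg β) _) (by linarith)
    _ = Real.exp (Real.log x - ⌈Real.log x / β⌉₊ * β) := by
        rw [← Real.exp_nat_mul, ← Real.exp_add]
        ring_nf
    _ ≤ 1 := Real.exp_le_one_iff.2 (by linarith)

theorem log_le_logb_two {x : ℝ} (hx : 1 ≤ x) : Real.log x ≤ Real.logb 2 x := by
  refine le_div_self (Real.log_nonneg hx) (Real.log_pos one_lt_two) ?_
  linarith [Real.log_two_lt_d9]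

theorem two_mul_sub_one_mul_le_pow_div {d : ℕ} {q t : ℝ} (hd : 2 ≤ d) (hq : 2 ≤ q) (ht : 0 < t)
    (htq : 8 * t ≤ q) : 2 * ((d - 1 : ℕ) : ℝ) * t ≤ q ^ d / (2 * t) := by
  have hpow : ((d - 1 : ℕ) : ℝ) ≤ q ^ (d - 2) := by
    calc ((d - 1 : ℕ) : ℝ) ≤ 2 ^ (d - 2) := by
          have := Nat.lt_two_pow_self (n := d - 2)
          exact_mod_cast (by omega : d - 1 ≤ 2 ^ (d - 2))
      _ ≤ q ^ (d - 2) := by gcongr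
  rw [le_div_iff₀ (by positivity)]
  calc 2 * ((d - 1 : ℕ) : ℝ) * t * (2 * t) = ((d - 1 : ℕ) : ℝ) * (2 * t) ^ 2 := by ring
    _ ≤ q ^ (d - 2) * q ^ 2 := by
        gcongr
        linarith
    _ = q ^ d := by rw [← pow_add, Nat.sub_add_cancel hd]

theorem log_pow_div_le {d : ℕ} {q t b : ℝ} (hq : 1 ≤ q) (hb : 0 < b) (hqb : q ≤ 16 * t * b) :
    Real.log (q ^ d) / (b / (6 * q)) ≤ 96 * d * (t * Real.logb 2 q) := by
  calc Real.log (q ^ d) / (b / (6 * q)) = d * Real.log q * (6 * q / b) := by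
        rw [Real.log_pow, div_div_eq_mul_div, mul_div_assoc]
    _ ≤ d * Real.logb 2 q * (96 * t) := by
        have hlogb : 0 ≤ Real.logb 2 q := Real.logb_nonneg one_lt_two hq
        gcongr
        · exact log_le_logb_two hq
        · rw [div_le_iff₀ hb]
          linarith
    _ = 96 * d * (t * Real.logb 2 q) := by ring

-- With `L ≈ q / (8 t)`, each step of the graph container argument shrinks the ground set by a
-- factor of at most `1 - 1 / (96 t)`.
theorem exists_container_parameters {d : ℕ} {q t : ℝ} (hd : 2 ≤ d) (ht : 1 ≤ t) (htd : q ≤ t ^ d)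
    (htq : 8 * t ≤ q) :
    ∃ L s n : ℕ, 1 ≤ L ∧ (L : ℝ) ≤ 6 * q ∧ L ≤ s.choose (d - 1) ∧
      4 * (L : ℝ) * q ^ (d - 1) ≤ q ^ d / (2 * t) ∧ (s : ℝ) ≤ q ^ d / (2 * t) ∧
      (1 - (L : ℝ) / (6 * q)) ^ n * q ^ d ≤ 1 ∧
      (s : ℝ) + n ≤ 98 * d * (t * Real.logb 2 q) := by
  have hq : 2 ≤ q := by linarith
  obtain ⟨L, hL, hLx, hxL⟩ : ∃ L : ℕ, 1 ≤ L ∧ (L : ℝ) ≤ q / (8 * t) ∧ q / (8 * t) ≤ 2 * L :=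
    exists_nat_le_and_le_two_mul (by rwa [one_le_div (by positivity)])
  rw [le_div_iff₀ (by positivity)] at hLx
  rw [div_le_iff₀ (by positivity)] at hxL
  have hLq : (L : ℝ) ≤ 6 * q := by nlinarith
  have hLt : (L : ℝ) ≤ t ^ (d - 1) := by
    refine le_of_mul_le_mul_right ?_ (zero_lt_one.trans_le ht)
    rw [pow_sub_one_mul (by omega)]
    nlinarith
  obtain ⟨s, hLs, hs⟩ := exists_le_choose_and_le_two_mul ht hLt
  obtain ⟨n, hn, hdecay⟩ := exists_one_sub_pow_mul_le_one (β := L / (6 * q)) (x := q ^ d)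
    (by positivity) (div_le_one_of_le₀ hLq (by positivity)) (one_le_pow₀ (by linarith))
  refine ⟨L, s, n, hL, hLq, hLs, ?_, ?_, hdecay, ?_⟩
  · rw [le_div_iff₀ (by positivity), ← pow_sub_one_mul (by omega : d ≠ 0) q]
    nlinarith [pow_pos (zero_lt_two.trans_le hq) (d - 1)]
  · exact hs.trans (two_mul_sub_one_mul_le_pow_div hd hq (by linarith) htq)
  · have hlog : 1 ≤ Real.logb 2 q := by
      rwa [Real.le_logb_iff_rpow_le one_lt_two (by linarith), Real.rpow_one]
    have hs' : (s : ℝ) ≤ 2 * (d - 1 : ℕ) * (t * Real.logb 2 q) :=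
      hs.trans (by gcongr; exact le_mul_of_one_le_right (by linarith) hlog)
    rw [Nat.cast_sub (by omega), Nat.cast_one] at hs'
    have hn' := log_pow_div_le (d := d) (t := t) (b := L) (by linarith) (by positivity)
      (by linarith : q ≤ 16 * t * L)
    linarith [one_le_mul_of_one_le_of_one_le ht hlog]

end Estimates

section Hyperplanes

variable {F V : Type*} [Field F] [AddCommGroup V] [Module F V]

theorem card_le_finrank_of_affineIndependent_of_eqOn [FiniteDimensional F V] {s : Finset V}
    (hs : AffineIndependent F ((↑) : s → V)) {f : Dual F V} (hf : f ≠ 0) {c : F}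
    (hc : ∀ x ∈ s, f x = c) : #s ≤ finrank F V := by
  have hspan : vectorSpan F (Set.range ((↑) : s → V)) ≤ f.ker := by
    rw [vectorSpan_def, Submodule.span_le]
    rintro _ ⟨_, ⟨x, rfl⟩, _, ⟨y, rfl⟩, rfl⟩
    simp [hc x x.2, hc y y.2]
  have hker : finrank F f.ker < finrank F V :=
    Submodule.finrank_lt (LinearMap.ker_eq_top.not.2 hf)
  have hcard := hs.card_le_finrank_succ
  rw [Fintype.card_coe] at hcard
  have := Submodule.finrank_mono hspan
  omega

/-- A pencil of hyperplanes through `T`: for every point `x` a hyperplane `{y | φ x y = φ x x}`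
containing `x` and `T`, where `φ` takes at most `q + 1` values. Since `φ x` is constant on `T`, two
points with the same value of `φ` lie on the same hyperplane as soon as `T` is nonempty. -/
structure IsPencil [Fintype F] (T : Set V) (φ : V → Dual F V) : Prop where
  ne_zero : ∀ x, φ x ≠ 0
  apply_eq : ∀ x, ∀ t ∈ T, φ x t = φ x x
  ncard_range_le : (Set.range φ).ncard ≤ Fintype.card F + 1

theorem IsPencil.apply_eq_of_eq [Fintype F] {T : Set V} {φ : V → Dual F V} (hφ : IsPencil T φ)
    (hT : T.Nonempty) {x y : V} (h : φ y = φ x) : φ x y = φ x x := by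
  obtain ⟨t, ht⟩ := hT
  rw [← hφ.apply_eq x t ht, ← h, hφ.apply_eq y t ht]

variable [FiniteDimensional F V]

theorem IsPencil.card_image_le [Fintype F] [DecidableEq (Dual F V)] {T : Set V} {φ : V → Dual F V}
    (hφ : IsPencil T φ) (B : Finset V) : #(B.image φ) ≤ Fintype.card F + 1 := by
  have : Finite V := Module.finite_of_finite F
  rw [← Set.ncard_coe_finset, coe_image]
  exact (Set.ncard_le_ncard (Set.image_subset_range φ B) (Set.finite_range φ)).trans
    hφ.ncard_range_le

theorem exists_linearIndependent_pair_eqOn {T : Finset V} (hcard : #T < finrank F V) {p : V}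
    (hp : p ∈ T) : ∃ a b : Dual F V, LinearIndependent F ![a, b] ∧
      (∀ t ∈ T, a t = a p) ∧ ∀ t ∈ T, b t = b p := by
  classical
  set W := vectorSpan F (T : Set V)
  have hW : finrank F W ≤ #T - 1 := by
    have hpos := card_pos.2 ⟨p, hp⟩
    have := finrank_vectorSpan_image_finset_le F id T (n := #T - 1) (by omega)
    rwa [image_id] at this
  have hann : 1 < finrank F W.dualAnnihilator := by
    have hpos := card_pos.2 ⟨p, hp⟩
    have := Subspace.finrank_add_finrank_dualAnnihilator_eq W
    omega
  have : Nontrivial W.dualAnnihilator := nontrivial_of_finrank_pos (zero_lt_one.trans hann)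
  obtain ⟨a, ha⟩ := exists_ne (0 : W.dualAnnihilator)
  obtain ⟨b, hab⟩ := exists_linearIndependent_pair_of_one_lt_finrank (R := F)
    (M := W.dualAnnihilator) hann ha
  have heq (g : W.dualAnnihilator) (t : V) (ht : t ∈ T) : (g : Dual F V) t = (g : Dual F V) p := by
    rw [← sub_eq_zero, ← map_sub]
    exact (Submodule.mem_dualAnnihilator _).1 g.2 _ (vsub_mem_vectorSpan F ht hp)
  exact ⟨a, b, LinearIndependent.pair_iff.2 fun r s h ↦
    LinearIndependent.pair_iff.1 hab r s (Subtype.ext h), heq a, heq b⟩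

theorem exists_isPencil [Fintype F] {T : Finset V} (hT : T.Nonempty) (hcard : #T < finrank F V) :
    ∃ φ : V → Dual F V, IsPencil (T : Set V) φ := by
  classical
  obtain ⟨p, hp⟩ := hT
  obtain ⟨a, b, hab, ha, hb⟩ := exists_linearIndependent_pair_eqOn hcard hp
  rw [LinearIndependent.pair_iff] at hab
  -- The pencil spanned by `a` and `b`, parametrised by the projective line `F ∪ {∞}`.
  let form : Option F → Dual F V := fun o ↦ o.elim b fun r ↦ a - r • b
  let slope : V → Option F := fun x ↦
    if b (x - p) = 0 then none else some (a (x - p) / b (x - p))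
  have hform_ne (o : Option F) : form o ≠ 0 := by
    rcases o with _ | r <;> intro h
    · simpa using hab 0 1 (by simpa [form] using h)
    · simpa using hab 1 (-r) (by simpa [form, sub_eq_add_neg] using h)
  have hform_T (o : Option F) (t : V) (ht : t ∈ T) : form o t = form o p := by
    rcases o with _ | r <;> simp [form, ha t ht, hb t ht]
  have hform_slope (x : V) : form (slope x) x = form (slope x) p := by
    rw [← sub_eq_zero, ← map_sub]
    by_cases h : b (x - p) = 0
    · simp only [slope, if_pos h, form, Option.elim, h]
    · simp only [slope, if_neg h, form, Option.elim, LinearMap.sub_apply, LinearMap.smul_apply,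
        smul_eq_mul, div_mul_cancel₀ _ h, sub_self]
  refine ⟨fun x ↦ form (slope x), fun x ↦ hform_ne _, fun x t ht ↦ ?_, ?_⟩
  · rw [hform_T _ t ht, hform_slope]
  · calc (Set.range (form ∘ slope)).ncard ≤ (Set.range form).ncard :=
        Set.ncard_le_ncard (Set.range_comp_subset_range slope form) (Set.finite_range form)
      _ ≤ Nat.card (Option F) := Finite.card_range_le form
      _ = Fintype.card F + 1 := by rw [Nat.card_eq_fintype_card, Fintype.card_option]

theorem card_hyperplane_inter_le [Fintype F] [Fintype V] [DecidableEq F] {f g : Dual F V}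
    (hf : f ≠ 0) {x z : V} (hfz : f z = f x) (hgz : g z ≠ g x) :
    #{y : V | f y = f x ∧ g y = g x} ≤ Fintype.card F ^ (finrank F V - 2) := by
  have hlt : f.ker ⊓ g.ker < f.ker := by
    refine lt_of_le_of_ne inf_le_left fun h ↦ hgz ?_
    have hmem : z - x ∈ f.ker ⊓ g.ker := by
      rw [h, LinearMap.mem_ker, map_sub, hfz, sub_self]
    rw [← sub_eq_zero, ← map_sub]
    exact hmem.2
  have hrank : finrank F ↥(f.ker ⊓ g.ker) ≤ finrank F V - 2 := by
    have h₁ := Submodule.finrank_lt_finrank_of_lt hlt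
    have h₂ := Submodule.finrank_lt (LinearMap.ker_eq_top.not.2 hf)
    omega
  calc #{y : V | f y = f x ∧ g y = g x} = Nat.card {y : V // f y = f x ∧ g y = g x} := by
        rw [Nat.card_eq_fintype_card, Fintype.card_subtype]
    _ ≤ Nat.card ↥(f.ker ⊓ g.ker) := by
        refine Nat.card_le_card_of_injective
          (fun y ↦ ⟨y - x, by simp [y.2.1], by simp [y.2.2]⟩) fun y y' h ↦ ?_
        simpa [Subtype.ext_iff] using h
    _ = Fintype.card F ^ finrank F ↥(f.ker ⊓ g.ker) := by
        rw [Module.natCard_eq_pow_finrank (K := F), Nat.card_eq_fintype_card]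
    _ ≤ Fintype.card F ^ (finrank F V - 2) := Nat.pow_le_pow_right Fintype.card_pos hrank

end Hyperplanes

section GeneralPosition

variable {F : Type*} [Field F] {d : ℕ} {P : Set (Fin d → F)} {S : Finset (Fin d → F)}

theorem IsGenPos.card_le_of_eqOn (hP : IsGenPos F d P) {s : Finset (Fin d → F)} (hs : ↑s ⊆ P)
    {f : Dual F (Fin d → F)} (hf : f ≠ 0) {c : F} (hc : ∀ x ∈ s, f x = c) : #s ≤ d := by
  by_contra! hcard
  obtain ⟨t, hts, ht⟩ := exists_subset_card_eq (show d + 1 ≤ #s from hcard)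
  have hindep := hP t ((coe_subset.2 hts).trans hs) ht
  have := card_le_finrank_of_affineIndependent_of_eqOn hindep hf fun x hx ↦ hc x (hts hx)
  rw [finrank_fin_fun] at this
  omega

variable [Fintype F] {𝒯 : Finset (Finset (Fin d → F))}
  {φ : Finset (Fin d → F) → (Fin d → F) → Dual F (Fin d → F)}

open Classical in
/-- The points outside `S` that lie on no hyperplane through `d` points of `S`: the only points
by which a general position set containing `S` can extend `S`. -/
noncomputable def freePoints (S : Finset (Fin d → F)) : Finset (Fin d → F) :=
  {x | x ∉ S ∧ ∀ f : Dual F (Fin d → F), f ≠ 0 → #{y ∈ S | f y = f x} < d}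

theorem IsGenPos.sdiff_subset_freePoints (hP : IsGenPos F d P) (hS : ↑S ⊆ P) :
    P \ ↑S ⊆ freePoints S := by
  classical
  rintro x ⟨hxP, hxS⟩
  refine mem_coe.2 (mem_filter.2 ⟨mem_univ x, hxS, fun f hf ↦ ?_⟩)
  rw [Nat.lt_iff_add_one_le, ← card_insert_of_notMem fun hx ↦ hxS (filter_subset _ _ hx)]
  refine hP.card_le_of_eqOn ?_ hf (c := f x) ?_
  · rw [coe_insert]
    exact Set.insert_subset hxP ((coe_subset.2 (filter_subset _ _)).trans hS)
  · simp

theorem IsGenPos.isIndepSet_sdiff (hd : 2 ≤ d) (h𝒯 : 𝒯 ⊆ S.powersetCard (d - 1))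
    (hφ : ∀ T ∈ 𝒯, IsPencil (T : Set (Fin d → F)) (φ T)) (hP : IsGenPos F d P) (hS : ↑S ⊆ P) :
    (coincidenceGraph 𝒯 φ).IsIndepSet (P \ ↑S) := by
  classical
  rintro x ⟨hxP, hxS⟩ y ⟨hyP, hyS⟩ - ⟨hxy, T, hT, hyx⟩
  obtain ⟨hTS, hTcard⟩ := mem_powersetCard.1 (h𝒯 hT)
  have hTne : T.Nonempty := card_pos.1 (by omega)
  have hcard : #(insert x (insert y T)) = d + 1 := by
    have hx : x ∉ insert y T := by
      rw [mem_insert, not_or]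
      exact ⟨hxy, fun hx ↦ hxS (hTS hx)⟩
    rw [card_insert_of_notMem hx, card_insert_of_notMem fun hy ↦ hyS (hTS hy), hTcard]
    omega
  have hsub : ↑(insert x (insert y T)) ⊆ P := by
    rw [coe_insert, coe_insert]
    exact Set.insert_subset hxP (Set.insert_subset hyP ((coe_subset.2 hTS).trans hS))
  have hle := hP.card_le_of_eqOn hsub ((hφ T hT).ne_zero x) (c := φ T x x) <| by
    simp only [mem_insert, forall_eq_or_imp, true_and]
    exact ⟨(hφ T hT).apply_eq_of_eq hTne hyx, (hφ T hT).apply_eq x⟩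
  omega

open Classical in
theorem card_coincident_le_of_mem_freePoints (hd : 2 ≤ d) (h𝒯 : 𝒯 ⊆ S.powersetCard (d - 1))
    (hφ : ∀ T ∈ 𝒯, IsPencil (T : Set (Fin d → F)) (φ T)) {x : Fin d → F}
    (hx : x ∈ freePoints S) (B : Finset (Fin d → F)) :
    (𝒯 : Set (Finset (Fin d → F))).Pairwise fun T T' ↦
      #{y ∈ B | φ T y = φ T x ∧ φ T' y = φ T' x} ≤ Fintype.card F ^ (d - 2) := by
  intro T hT T' hT' hne
  obtain ⟨hTS, hTcard⟩ := mem_powersetCard.1 (h𝒯 hT)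
  obtain ⟨hTS', hTcard'⟩ := mem_powersetCard.1 (h𝒯 hT')
  have hsep : ∃ z ∈ T, φ T' x z ≠ φ T' x x := by
    by_contra! hall
    have hunion : T ∪ T' ⊆ {y ∈ S | φ T' x y = φ T' x x} := by
      refine union_subset (fun t ht ↦ ?_) fun t ht ↦ ?_
      · exact mem_filter.2 ⟨hTS ht, hall t ht⟩
      · exact mem_filter.2 ⟨hTS' ht, (hφ T' hT').apply_eq x t ht⟩
    have hlt := (card_le_card hunion).trans_lt
      ((mem_filter.1 hx).2.2 _ ((hφ T' hT').ne_zero x))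
    have hT_eq : T = T ∪ T' := eq_of_subset_of_card_le subset_union_left (by omega)
    have hT'_eq : T' = T ∪ T' := eq_of_subset_of_card_le subset_union_right (by omega)
    exact hne (hT_eq.trans hT'_eq.symm)
  obtain ⟨z, hz, hzx⟩ := hsep
  have hinter :=
    card_hyperplane_inter_le ((hφ T hT).ne_zero x) ((hφ T hT).apply_eq x z hz) hzx
  rw [finrank_fin_fun] at hinter
  refine (card_le_card fun y hy ↦ ?_).trans hinter
  obtain ⟨-, hTy, hTy'⟩ := mem_filter.1 hy
  exact mem_filter.2 ⟨mem_univ y,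
    (hφ T hT).apply_eq_of_eq (card_pos.1 (by omega)) hTy,
    (hφ T' hT').apply_eq_of_eq (card_pos.1 (by omega)) hTy'⟩

open Classical in
theorem exists_le_degree_coincidenceGraph (hd : 2 ≤ d) (h𝒯 : 𝒯 ⊆ S.powersetCard (d - 1))
    (hφ : ∀ T ∈ 𝒯, IsPencil (T : Set (Fin d → F)) (φ T)) (h𝒯ne : 𝒯.Nonempty)
    {B : Finset (Fin d → F)} (hB : B ⊆ freePoints S)
    (hcard : 4 * (#𝒯 : ℝ) * (Fintype.card F : ℝ) ^ (d - 1) ≤ #B) :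
    ∃ x ∈ B, (#𝒯 : ℝ) / (6 * Fintype.card F) * #B ≤
      #{y ∈ B | (coincidenceGraph 𝒯 φ).Adj x y} := by
  have hq : (2 : ℝ) ≤ Fintype.card F := mod_cast Fintype.one_lt_card
  have hL : (1 : ℝ) ≤ #𝒯 := mod_cast h𝒯ne.card_pos
  have hBne : B.Nonempty := by
    rw [← card_pos, ← Nat.cast_pos (α := ℝ)]
    exact lt_of_lt_of_le (by positivity) hcard
  obtain ⟨x, hx, hle⟩ := exists_card_mul_card_le_of_coincidences hBne
    (fun T hT ↦ (hφ T hT).card_image_le B)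
    (fun x hx ↦ card_coincident_le_of_mem_freePoints hd h𝒯 hφ (hB hx) B)
  refine ⟨x, hx, div_mul_le_of_mul_le_add hL hq (D := (Fintype.card F : ℝ) ^ (d - 2))
    (one_le_pow₀ (by linarith)) ?_ ?_⟩
  · rwa [← pow_succ', show d - 2 + 1 = d - 1 by omega]
  · have hadj := card_coincidences_le_card_adj_add_one 𝒯 φ B x
    exact_mod_cast hle.trans (by gcongr)

theorem hasContainers_isGenPos_superset {M : ℝ} {L n : ℕ} (hd : 2 ≤ d) (hL : 1 ≤ L)
    (hLq : L ≤ 6 * Fintype.card F) (hLS : L ≤ (#S).choose (d - 1))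
    (hM : 4 * (L : ℝ) * (Fintype.card F : ℝ) ^ (d - 1) ≤ M)
    (hn : (1 - (L : ℝ) / (6 * Fintype.card F)) ^ n * (Fintype.card F : ℝ) ^ d ≤ M) :
    HasContainers (fun P ↦ P ⊆ ↑S ∨ IsGenPos F d P ∧ ↑S ⊆ P) (M + #S)
      (((Fintype.card F : ℝ) ^ d) ^ n) := by
  classical
  obtain ⟨𝒯, h𝒯, rfl⟩ := exists_subset_card_eq (hLS.trans_eq (card_powersetCard _ S).symm)
  have hpencil : ∀ T ∈ 𝒯, ∃ φ, IsPencil (T : Set (Fin d → F)) φ := fun T hT ↦ by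
    have hT := (mem_powersetCard.1 (h𝒯 hT)).2
    exact exists_isPencil (card_pos.1 (by omega)) (by rw [finrank_fin_fun]; omega)
  choose! φ hφ using hpencil
  have hfree : #(freePoints S) < Fintype.card F ^ d := by
    obtain ⟨T, hT⟩ := card_pos.1 hL
    obtain ⟨hTS, hTcard⟩ := mem_powersetCard.1 (h𝒯 hT)
    obtain ⟨x, hx⟩ : T.Nonempty := card_pos.1 (by omega)
    have hxfree : x ∉ freePoints S := fun h ↦ (mem_filter.1 h).2.1 (hTS hx)
    simpa using card_lt_univ_of_notMem hxfree
  have hβ : (#𝒯 : ℝ) / (6 * Fintype.card F) ≤ 1 :=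
    div_le_one_of_le₀ (mod_cast hLq) (by positivity)
  have hindep := hasContainers_isIndepSet_of_le_degree (G := coincidenceGraph 𝒯 φ) hβ hfree
    (fun B hB hMB ↦ exists_le_degree_coincidenceGraph hd h𝒯 hφ (card_pos.1 hL) hB
      (hM.trans hMB.le)) n subset_rfl <| hn.trans' <| by
    have := sub_nonneg.2 hβ
    gcongr
    exact_mod_cast hfree.le
  rw [Nat.cast_pow] at hindep
  refine (hindep.of_sdiff S).mono ?_ le_rfl le_rfl
  rintro P (hPS | ⟨hP, hSP⟩)
  · simp [Set.sdiff_eq_empty.2 hPS, SimpleGraph.IsIndepSet]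
  · exact ⟨hP.sdiff_subset_freePoints hSP, hP.isIndepSet_sdiff hd h𝒯 hφ hSP⟩

theorem hasContainers_isGenPos {M : ℝ} {s L n : ℕ} (hd : 2 ≤ d) (hL : 1 ≤ L)
    (hLq : L ≤ 6 * Fintype.card F) (hLs : L ≤ s.choose (d - 1)) (hs : s ≤ Fintype.card F ^ d)
    (hM : 4 * (L : ℝ) * (Fintype.card F : ℝ) ^ (d - 1) ≤ M)
    (hn : (1 - (L : ℝ) / (6 * Fintype.card F)) ^ n * (Fintype.card F : ℝ) ^ d ≤ M) :
    HasContainers (IsGenPos F d) (M + s) (((Fintype.card F : ℝ) ^ d) ^ (s + n)) := by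
  classical
  have hfingerprint : ∀ S ∈ (univ : Finset (Fin d → F)).powersetCard s,
      HasContainers (fun P ↦ P ⊆ ↑S ∨ IsGenPos F d P ∧ ↑S ⊆ P) (M + s)
        (((Fintype.card F : ℝ) ^ d) ^ n) := fun S hS ↦ by
    obtain rfl := (mem_powersetCard.1 hS).2
    exact hasContainers_isGenPos_superset hd hL hLq hLs hM hn
  have hcard : Fintype.card (Fin d → F) = Fintype.card F ^ d := by simp
  refine (HasContainers.biUnion hfingerprint).mono (fun P hP ↦ ?_) le_rfl ?_
  · have hPfin : ↑P.toFinset = P := Set.coe_toFinset P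
    rcases le_total s #P.toFinset with hsP | hPs
    · obtain ⟨S, hSP, hS⟩ := exists_subset_card_eq hsP
      exact ⟨S, mem_powersetCard.2 ⟨subset_univ S, hS⟩,
        Or.inr ⟨hP, hPfin ▸ coe_subset.2 hSP⟩⟩
    · obtain ⟨S, hPS, hS⟩ := exists_superset_card_eq hPs (hs.trans_eq hcard.symm)
      exact ⟨S, mem_powersetCard.2 ⟨subset_univ S, hS⟩, Or.inl (hPfin ▸ coe_subset.2 hPS)⟩
  · rw [pow_add, card_powersetCard, card_univ, hcard]
    gcongr
    exact_mod_cast Nat.choose_le_pow _ s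

end GeneralPosition

section Main

variable {F : Type*} [Field F] [Fintype F] {d : ℕ}

theorem exists_hasContainers_isGenPos_div {t : ℝ} (hd : 2 ≤ d) (ht : 1 ≤ t)
    (htd : Fintype.card F ≤ t ^ d) (htq : 8 * t ≤ Fintype.card F) :
    ∃ m : ℕ, (m : ℝ) ≤ 98 * d * (t * Real.logb 2 (Fintype.card F)) ∧
      HasContainers (IsGenPos F d) ((Fintype.card F : ℝ) ^ d / t)
        (((Fintype.card F : ℝ) ^ d) ^ m) := by
  set q : ℝ := (Fintype.card F : ℝ)
  have hq : 2 ≤ q := by linarith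
  obtain ⟨L, s, n, hL, hLq, hLs, hLM, hsM, hdecay, hsn⟩ :=
    exists_container_parameters hd ht htd htq
  have hM : 1 ≤ q ^ d / (2 * t) := by
    rw [one_le_div (by positivity)]
    linarith [le_self_pow₀ (one_le_two.trans hq) (by omega : d ≠ 0)]
  refine ⟨s + n, mod_cast hsn, ?_⟩
  refine (hasContainers_isGenPos hd hL ?_ hLs ?_ hLM (hdecay.trans hM)).mono
    (fun _ ↦ id) ?_ le_rfl
  · rify
    exact hLq
  · rify
    exact hsM.trans (div_le_self (by positivity) (by linarith))
  · calc q ^ d / (2 * t) + s ≤ q ^ d / (2 * t) + q ^ d / (2 * t) := by gcongr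
      _ = q ^ d / t := by field_simp; norm_num

theorem container_theorem_Fqd_third_general {k : ℝ} (hd : 2 ≤ d)
    (hk : 8 * (Fintype.card F : ℝ) ^ ((d : ℝ) - 2) ≤ k)
    (hk' : k ≤ (Fintype.card F : ℝ) ^ ((d : ℝ) - 1 - 1 / (d : ℝ))) :
    HasContainers (IsGenPos F d) (k * Fintype.card F)
      ((2 : ℝ) ^ (98 * (d : ℝ) ^ 2 * k⁻¹ * (Fintype.card F : ℝ) ^ ((d : ℝ) - 1) *
        Real.logb 2 (Fintype.card F) ^ 2)) := by
  have hq : 1 < (Fintype.card F : ℝ) := mod_cast Fintype.one_lt_card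
  set q : ℝ := (Fintype.card F : ℝ)
  have hq0 : 0 < q := zero_lt_one.trans hq
  have hk0 : 0 < k := lt_of_lt_of_le (by positivity) hk
  have ht : q ^ (1 / (d : ℝ)) ≤ q ^ ((d : ℝ) - 1) / k := by
    rw [Real.rpow_sub hq0, le_div_iff₀ (by positivity)] at hk'
    rwa [le_div_iff₀ hk0, mul_comm]
  obtain ⟨m, hm, hcontainers⟩ := exists_hasContainers_isGenPos_div (F := F) hd
    ((Real.one_le_rpow hq.le (by positivity)).trans ht)
    (by
      calc q = (q ^ (1 / (d : ℝ))) ^ d := by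
            rw [one_div, Real.rpow_inv_natCast_pow hq0.le (by omega)]
        _ ≤ (q ^ ((d : ℝ) - 1) / k) ^ d := by gcongr)
    (by
      have hsub : q ^ ((d : ℝ) - 1) = q ^ ((d : ℝ) - 2) * q := by
        rw [← Real.rpow_add_one hq0.ne']
        ring_nf
      rw [mul_div_assoc', div_le_iff₀ hk0, hsub]
      linarith [mul_le_mul_of_nonneg_right hk hq0.le])
  refine hcontainers.mono (fun _ ↦ id) (le_of_eq ?_) ?_
  · rw [← Real.rpow_natCast, div_div_eq_mul_div, mul_comm, mul_div_assoc, ← Real.rpow_sub hq0]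
    simp
  · calc (q ^ d) ^ m = (2 : ℝ) ^ (Real.logb 2 q * (d * m)) := by
          rw [Real.rpow_mul zero_le_two, Real.rpow_logb zero_lt_two (by norm_num) hq0,
            ← pow_mul, ← Nat.cast_mul, Real.rpow_natCast]
      _ ≤ _ := by
          refine Real.rpow_le_rpow_of_exponent_le one_le_two ?_
          have hlog : 0 ≤ Real.logb 2 q := Real.logb_nonneg one_lt_two hq.le
          calc Real.logb 2 q * (d * m)
              ≤ Real.logb 2 q * (d * (98 * d * (q ^ ((d : ℝ) - 1) / k * Real.logb 2 q))) := by
                gcongr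
            _ = _ := by ring

end Main

/-- The third container theorem for general position sets in `𝔽_q^d`:
for `4d·q^{d−2} ≤ k ≤ q^{d−1−1/d}` there is a container collection of size at most
`2^{c·k⁻¹·q^{d−1}·(log q)²}` whose members have size at most `kq`. -/
theorem container_theorem_Fqd_third (d : ℕ) (hd : 2 ≤ d) :
    ∃ c : ℝ, 0 < c ∧ ∃ Q : ℕ, ∀ q : ℕ, Q ≤ q → IsPrimePow q →
      ∀ (F : Type) [Field F] [Fintype F], Fintype.card F = q →
        ∀ k : ℝ, 4 * (d : ℝ) * (q : ℝ) ^ ((d : ℝ) - 2) ≤ k →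
          k ≤ (q : ℝ) ^ ((d : ℝ) - 1 - 1 / (d : ℝ)) →
          ∃ 𝒞 : Finset (Finset (Fin d → F)),
            (∀ P : Set (Fin d → F), IsGenPos F d P → ∃ C ∈ 𝒞, P ⊆ ↑C) ∧
            (∀ C ∈ 𝒞, (C.card : ℝ) ≤ k * q) ∧
            ((𝒞.card : ℝ) ≤ (2 : ℝ) ^
              (c * k⁻¹ * (q : ℝ) ^ ((d : ℝ) - 1) * (Real.logb 2 q) ^ 2)) := by
  refine ⟨98 * d ^ 2, by positivity, 0, ?_⟩
  rintro _ - - F _ _ rfl k hk hk'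
  have hd' : (2 : ℝ) ≤ d := mod_cast hd
  exact container_theorem_Fqd_third_general hd
    (le_trans (by gcongr ?_ * _; linarith) hk) hk'
end

section
/- For every integer d ≥ 2 there exists a constant c > 0 such that for every δ > 0 there exists Q with the following property for every prime power q ≥ Q. Let S_p be a p-random subset of 𝔽_q^d (each point included independently with probability p). (a) If 0 ≤ p ≤ q^{−d+2/d}·(log q)², then the probability that S_p contains a general position set of size at least c·q^{1/d}·(log q)² is at most δ. (b) If q^{−d+2/d}·(log q)² ≤ p ≤ q^{−d+2d/(d+1)}·(log q)², then the probability that S_p contains a general position set of size at least c·p^{1/2}·q^{d/2}·log q is at most δ. -/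
open scoped Classical

/-- The probability, under the product Bernoulli distribution in which each point of the
finite ground set `V` is included independently with probability `p`, that the random
subset satisfies the event `E`. -/
noncomputable def bernoulliProb (V : Type*) [Fintype V] (p : ℝ)
    (E : Finset V → Prop) : ℝ :=
  ∑ S : Finset V,
    if E S then p ^ S.card * (1 - p) ^ (Fintype.card V - S.card) else 0

/-!
Fix a small fingerprint `R` of `t` points of the general position set and `T` of the
`(d - 1)`-subsets of `R`. The hyperplanes through each of these subsets form a pencil with `q + 1`
members. Two points outside `R` on the same member of a pencil would put `d + 1` points on a
hyperplane, so the rest of the general position set is independent in the graph which joins points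
sharing a member of some pencil. Cauchy–Schwarz for each pencil, together with the fact that members
of distinct pencils through the same point meet in codimension two, shows that this graph has edge
density about `T / q` on every vertex set of size at least a constant times `T * q ^ (d - 1)`. The
Kleitman–Winston argument then bounds the number of choices for the rest, and the theorem follows
from a union bound over the general position sets of a fixed size `m`, with `t` of order `m / log q`
and `T` of order `q * log q / t`.
-/

open Finset Module

namespace RandomTuran

section BernoulliSubset

variable {α : Type*} [Fintype α] {p : ℝ}

theorem bernoulliProb_superset (p : ℝ) (U : Finset α) :
    bernoulliProb α p (U ⊆ ·) = p ^ #U := by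
  have hterm (S : Finset α) :
      (if U ⊆ S then p ^ #S * (1 - p) ^ (Fintype.card α - #S) else 0) =
        (∏ _i ∈ S, p) * ∏ i ∈ univ \ S, if i ∈ U then 0 else 1 - p := by
    split_ifs with hUS
    · have hS : ∏ i ∈ univ \ S, (if i ∈ U then 0 else 1 - p) = ∏ _i ∈ univ \ S, (1 - p) :=
        prod_congr rfl fun i hi ↦ if_neg fun hiU ↦ (mem_sdiff.1 hi).2 (hUS hiU)
      rw [hS, prod_const, prod_const, card_univ_sdiff]
    · obtain ⟨i, hiU, hiS⟩ := not_subset.1 hUS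
      have hS : ∏ i ∈ univ \ S, (if i ∈ U then 0 else 1 - p) = 0 :=
        prod_eq_zero (mem_sdiff.2 ⟨mem_univ i, hiS⟩) (if_pos hiU)
      rw [hS, mul_zero]
  calc bernoulliProb α p (U ⊆ ·)
      = ∏ i : α, (p + if i ∈ U then 0 else 1 - p) := by
        rw [prod_add, powerset_univ]
        exact sum_congr rfl fun S _ ↦ by convert hterm S
    _ = ∏ i : α, if i ∈ U then p else 1 := by
        refine prod_congr rfl fun i _ ↦ ?_
        split_ifs <;> ring
    _ = p ^ #U := by rw [prod_ite_mem, univ_inter, prod_const]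

theorem bernoulliProb_mono (hp0 : 0 ≤ p) (hp1 : p ≤ 1) {E E' : Finset α → Prop}
    (h : ∀ S, E S → E' S) : bernoulliProb α p E ≤ bernoulliProb α p E' := by
  have : 0 ≤ 1 - p := sub_nonneg.2 hp1
  refine sum_le_sum fun S _ ↦ ?_
  by_cases hS : E S
  · rw [if_pos hS, if_pos (h S hS)]
  · rw [if_neg hS]
    split_ifs <;> positivity

theorem bernoulliProb_le_sum_pow (hp0 : 0 ≤ p) (hp1 : p ≤ 1) {E : Finset α → Prop}
    {𝒰 : Finset (Finset α)} (hE : ∀ S, E S → ∃ U ∈ 𝒰, U ⊆ S) :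
    bernoulliProb α p E ≤ ∑ U ∈ 𝒰, p ^ #U := by
  have : 0 ≤ 1 - p := sub_nonneg.2 hp1
  have hterm (U S : Finset α) :
      0 ≤ if U ⊆ S then p ^ #S * (1 - p) ^ (Fintype.card α - #S) else 0 := by
    split_ifs <;> positivity
  calc bernoulliProb α p E
      ≤ ∑ S, ∑ U ∈ 𝒰, if U ⊆ S then p ^ #S * (1 - p) ^ (Fintype.card α - #S) else 0 := by
        refine sum_le_sum fun S _ ↦ ?_
        split_ifs with hS
        · obtain ⟨U, hU, hUS⟩ := hE S hS
          exact (if_pos hUS).ge.trans (single_le_sum (fun U _ ↦ hterm U S) hU)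
        · exact sum_nonneg fun U _ ↦ hterm U S
    _ = ∑ U ∈ 𝒰, bernoulliProb α p (U ⊆ ·) := by
        rw [sum_comm]
        refine sum_congr rfl fun U _ ↦ sum_congr rfl fun S _ ↦ ?_
        congr
    _ = ∑ U ∈ 𝒰, p ^ #U := sum_congr rfl fun U _ ↦ bernoulliProb_superset p U

end BernoulliSubset

section FinsetCounting

variable {α β ι : Type*}

theorem sq_card_le_card_mul_sum_card_fiber [Fintype β] [DecidableEq β] (A : Finset α) (f : α → β) :
    #A ^ 2 ≤ Fintype.card β * ∑ x ∈ A, #{y ∈ A | f y = f x} := by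
  have hfiber : ∑ x ∈ A, #{y ∈ A | f y = f x} = ∑ b, #{y ∈ A | f y = b} ^ 2 := by
    rw [← sum_fiberwise A f]
    refine sum_congr rfl fun b _ ↦ ?_
    rw [sum_congr rfl fun x hx ↦ by rw [(mem_filter.1 hx).2], sum_const, smul_eq_mul, sq]
  rw [hfiber, card_eq_sum_card_fiberwise (f := f) (t := univ) fun _ _ ↦ mem_coe.2 (mem_univ _)]
  exact sq_sum_le_card_mul_sum_sq

theorem sum_card_le_card_biUnion_add (s : Finset ι) (B : ι → Finset α) {M : ℕ}
    (hB : (s : Set ι).Pairwise fun i j ↦ #(B i ∩ B j) ≤ M) :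
    ∑ i ∈ s, #(B i) ≤ #(s.biUnion B) + #s ^ 2 * M := by
  induction s using Finset.induction_on with
  | empty => simp
  | insert i s hi ih =>
    have hinter : #(B i ∩ s.biUnion B) ≤ #s * M := by
      rw [inter_biUnion]
      exact card_biUnion_le_card_mul _ _ _ fun j hj ↦ hB (mem_coe.2 (mem_insert_self i s))
        (mem_coe.2 (mem_insert_of_mem hj)) (ne_of_mem_of_not_mem hj hi).symm
    have hunion := card_union_add_card_inter (B i) (s.biUnion B)
    have hs := ih (hB.mono (coe_subset.2 (subset_insert i s)))
    rw [sum_insert hi, biUnion_insert, card_insert_of_notMem hi]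
    nlinarith

theorem card_le_sum_powersetCard [Fintype α] (𝒰 : Finset (Finset α)) {t j : ℕ}
    (h𝒰 : ∀ P ∈ 𝒰, #P = t + j) :
    #𝒰 ≤ ∑ R ∈ powersetCard t univ, #{J ∈ powersetCard j Rᶜ | R ∪ J ∈ 𝒰} := by
  have hcover : 𝒰 ⊆ (powersetCard t univ).biUnion fun R ↦
      {J ∈ powersetCard j Rᶜ | R ∪ J ∈ 𝒰}.image (R ∪ ·) := by
    intro P hP
    obtain ⟨R, hRP, hR⟩ := exists_subset_card_eq (show t ≤ #P by have := h𝒰 P hP; omega)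
    have hJ : #(P \ R) = j := by rw [card_sdiff_of_subset hRP, h𝒰 P hP, hR]; omega
    have hunion : R ∪ P \ R = P := union_sdiff_of_subset hRP
    refine mem_biUnion.2 ⟨R, mem_powersetCard.2 ⟨subset_univ R, hR⟩,
      mem_image.2 ⟨P \ R, mem_filter.2 ⟨mem_powersetCard.2 ⟨?_, hJ⟩, hunion.symm ▸ hP⟩, hunion⟩⟩
    rw [compl_eq_univ_sdiff]
    exact sdiff_subset_sdiff (subset_univ P) Subset.rfl
  exact (card_le_card hcover).trans <|
    card_biUnion_le.trans <| sum_le_sum fun R _ ↦ card_image_le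

end FinsetCounting

section HardCore

variable {α : Type*} (G : SimpleGraph α) {lam : ℝ}

/-- The hard-core partition function of the subgraph of `G` induced by `A`: the sum of
`lam ^ #J` over the independent sets `J ⊆ A`. It counts independent sets, weighted by size. -/
noncomputable def hardCorePartition (lam : ℝ) (A : Finset α) : ℝ :=
  ∑ J ∈ A.powerset with G.IsIndepSet (J : Finset α), lam ^ #J

theorem hardCorePartition_le_one_add_pow (hlam : 0 ≤ lam) (A : Finset α) :
    hardCorePartition G lam A ≤ (1 + lam) ^ #A := by
  calc hardCorePartition G lam A ≤ ∑ J ∈ A.powerset, lam ^ #J :=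
        sum_le_sum_of_subset_of_nonneg (filter_subset _ _) fun _ _ _ ↦ by positivity
    _ = (1 + lam) ^ #A := by
        simpa only [one_pow, mul_one, add_comm lam] using sum_pow_mul_eq_add_pow lam 1 A

theorem hardCorePartition_insert {v : α} {B : Finset α} (hv : v ∉ B) :
    hardCorePartition G lam (insert v B) =
      hardCorePartition G lam B + lam * hardCorePartition G lam {y ∈ B | ¬ G.Adj v y} := by
  have hpowerset : {y ∈ B | ¬ G.Adj v y}.powerset =
      {J ∈ B.powerset | ∀ y ∈ J, ¬ G.Adj v y} := by
    ext J
    simp only [mem_powerset, mem_filter, subset_iff, forall_and]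
  have hindep {J : Finset α} (hJ : J ∈ B.powerset) :
      G.IsIndepSet (insert v J : Finset α) ↔ (∀ y ∈ J, ¬ G.Adj v y) ∧ G.IsIndepSet (J : Set α) := by
    have hvJ : v ∉ J := fun h ↦ hv (mem_powerset.1 hJ h)
    have : Std.Symm fun x y ↦ ¬ G.Adj x y := ⟨fun _ _ h h' ↦ h h'.symm⟩
    rw [coe_insert, SimpleGraph.isIndepSet_iff, Set.pairwise_insert_of_symm_of_notMem
      (mt mem_coe.1 hvJ), and_comm]
    simp only [mem_coe]
  simp only [hardCorePartition, sum_filter, sum_powerset_insert hv, hpowerset, mul_sum]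
  congr 1
  refine sum_congr rfl fun J hJ ↦ ?_
  simp only [hindep hJ, ite_and, mul_ite, mul_zero,
    card_insert_of_notMem fun h ↦ hv (mem_powerset.1 hJ h), pow_succ']

theorem card_nonneighbors_add_one_le {A : Finset α} {v : α} (hv : v ∈ A) {β : ℝ}
    (hdeg : β * #A ≤ #{y ∈ A | G.Adj v y}) :
    (#{y ∈ A.erase v | ¬ G.Adj v y} + 1 : ℝ) ≤ #A * Real.exp (-β) := by
  have hadj : {y ∈ A.erase v | G.Adj v y} = {y ∈ A | G.Adj v y} := by
    rw [filter_erase, erase_eq_of_notMem (by simp)]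
  have hcard : (#{y ∈ A | G.Adj v y} + #{y ∈ A.erase v | ¬ G.Adj v y} + 1 : ℝ) = #A := by
    rw [← hadj]
    exact_mod_cast (congrArg (· + 1) (card_filter_add_card_filter_not (G.Adj v))).trans
      (card_erase_add_one hv)
  calc (#{y ∈ A.erase v | ¬ G.Adj v y} + 1 : ℝ) ≤ #A * (-β + 1) := by linarith
    _ ≤ #A * Real.exp (-β) := by gcongr; exact Real.add_one_le_exp _

theorem pow_add_mul_pow_le_add_one_pow {n E : ℕ} {β : ℝ} (hn : n ≠ 0) (hE : E ≠ 0)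
    (h : n * lam * Real.exp (-(β * E)) ≤ 1) :
    (n : ℝ) ^ E + lam * (n * Real.exp (-β)) ^ E ≤ (n + 1 : ℝ) ^ E := by
  have hn0 : (0 : ℝ) < n := by exact_mod_cast Nat.pos_of_ne_zero hn
  have hexp : Real.exp (-β) ^ E = Real.exp (-(β * E)) := by
    rw [← Real.exp_nat_mul]
    ring_nf
  calc (n : ℝ) ^ E + lam * (n * Real.exp (-β)) ^ E
      = (n : ℝ) ^ E * (1 + lam * Real.exp (-(β * E))) := by rw [mul_pow, hexp]; ring
    _ ≤ (n : ℝ) ^ E * (1 + 1 / n) := by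
        gcongr
        rw [le_div_iff₀ hn0]
        linarith
    _ ≤ (n : ℝ) ^ E * (1 + 1 / n) ^ E := by
        gcongr
        exact le_self_pow₀ (le_add_of_nonneg_right (by positivity)) hE
    _ = (n + 1 : ℝ) ^ E := by rw [← mul_pow]; congr 1; field_simp

/-- The Kleitman–Winston bound. A vertex `v` of large degree is either left out of the independent
set, or costs a factor `lam` and discards its neighbours, which shrinks the vertex set by a factor
`exp (-β)`; the bound `(#A + 1) ^ E` survives both branches. -/
theorem hardCorePartition_le {A₀ : Finset α} {s E : ℕ} {β : ℝ} (hlam : 0 ≤ lam) (hE : E ≠ 0)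
    (hdeg : ∀ A ⊆ A₀, s < #A → ∃ x ∈ A, β * #A ≤ #{y ∈ A | G.Adj x y})
    (hA₀ : #A₀ * lam * Real.exp (-(β * E)) ≤ 1) :
    hardCorePartition G lam A₀ ≤ (1 + lam) ^ s * (#A₀ + 1 : ℝ) ^ E := by
  suffices h : ∀ A ⊆ A₀, hardCorePartition G lam A ≤ (1 + lam) ^ s * (#A + 1 : ℝ) ^ E from
    h A₀ Subset.rfl
  intro A hA
  induction A using Finset.strongInduction with
  | H A ih =>
  by_cases hAs : #A ≤ s
  · calc hardCorePartition G lam A ≤ (1 + lam) ^ #A := hardCorePartition_le_one_add_pow G hlam A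
      _ ≤ (1 + lam) ^ s := pow_le_pow_right₀ (by linarith) hAs
      _ ≤ (1 + lam) ^ s * (#A + 1 : ℝ) ^ E :=
        le_mul_of_one_le_right (by positivity) (one_le_pow₀ (by simp))
  obtain ⟨v, hv, hvdeg⟩ := hdeg A hA (by omega)
  set B := {y ∈ A.erase v | ¬ G.Adj v y}
  have hBsub : B ⊆ A.erase v := filter_subset _ _
  have hout : hardCorePartition G lam (A.erase v) ≤ (1 + lam) ^ s * (#A : ℝ) ^ E := by
    rw [← card_erase_add_one hv, Nat.cast_succ]
    exact ih _ (erase_ssubset hv) ((erase_subset v A).trans hA)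
  have hin : hardCorePartition G lam B ≤ (1 + lam) ^ s * (#A * Real.exp (-β)) ^ E := by
    refine (ih B (hBsub.trans_ssubset (erase_ssubset hv))
      (hBsub.trans ((erase_subset v A).trans hA))).trans ?_
    gcongr
    exact card_nonneighbors_add_one_le G hv hvdeg
  have hlamA : #A * lam * Real.exp (-(β * E)) ≤ 1 := by
    refine le_trans ?_ hA₀
    gcongr
  calc hardCorePartition G lam A
      = hardCorePartition G lam (A.erase v) + lam * hardCorePartition G lam B := by
        rw [← hardCorePartition_insert G (notMem_erase v A), insert_erase hv]
    _ ≤ (1 + lam) ^ s * (#A : ℝ) ^ E + lam * ((1 + lam) ^ s * (#A * Real.exp (-β)) ^ E) := by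
        gcongr
    _ = (1 + lam) ^ s * ((#A : ℝ) ^ E + lam * (#A * Real.exp (-β)) ^ E) := by ring
    _ ≤ (1 + lam) ^ s * (#A + 1 : ℝ) ^ E := by
        gcongr
        exact pow_add_mul_pow_le_add_one_pow (card_ne_zero_of_mem hv) hE hlamA

end HardCore

section GeneralPosition

variable {F V : Type*} [Field F] [AddCommGroup V] [Module F V]

/-- A finite set is in general position if no affine hyperplane contains more than `finrank F V` of
its points. Hyperplanes are encoded as zero sets of nonzero affine functions; the nonzero constants,
which have empty zero set, are harmless. -/
def InGeneralPosition (F : Type*) {V : Type*} [Field F] [AddCommGroup V] [Module F V]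
    (P : Finset V) : Prop :=
  ∀ f : V →ᵃ[F] F, f ≠ 0 → #{x ∈ P | f x = 0} ≤ finrank F V

theorem InGeneralPosition.mono {P P' : Finset V} (hP : InGeneralPosition F P) (h : P' ⊆ P) :
    InGeneralPosition F P' :=
  fun f hf ↦ (card_le_card (filter_subset_filter _ h)).trans (hP f hf)

theorem InGeneralPosition.card_le {P Z : Finset V} (hP : InGeneralPosition F P) {f : V →ᵃ[F] F}
    (hf : f ≠ 0) (hZP : Z ⊆ P) (hZ : ∀ z ∈ Z, f z = 0) : #Z ≤ finrank F V :=
  (card_le_card fun z hz ↦ mem_filter.2 ⟨hZP hz, hZ z hz⟩).trans (hP f hf)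

theorem inGeneralPosition_of_isGenPos {d : ℕ} {P : Finset (Fin d → F)}
    (hP : IsGenPos F d ↑P) : InGeneralPosition F P := by
  intro f hf
  by_contra! hcard
  rw [finrank_fin_fun] at hcard
  obtain ⟨s, hsub, hs⟩ := exists_subset_card_eq (show d + 1 ≤ _ from hcard)
  have hindep := hP s (coe_subset.2 (hsub.trans (filter_subset _ P))) hs
  have hspan : affineSpan F (s : Set (Fin d → F)) = ⊤ := by
    simpa [hs] using hindep.affineSpan_eq_top_iff_card_eq_finrank_add_one
  exact hf <| AffineMap.ext_on hspan fun x hx ↦ (mem_filter.1 (hsub hx)).2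

/-- Evaluation of affine functions at a point, as a linear functional. -/
def affineEval (F : Type*) {V : Type*} [Field F] [AddCommGroup V] [Module F V] (x : V) :
    (V →ᵃ[F] F) →ₗ[F] F where
  toFun f := f x
  map_add' _ _ := rfl
  map_smul' _ _ := rfl

theorem card_common_zeros_le [Fintype F] [Finite V] {ι : Type*} [Fintype ι] {f : ι → V →ᵃ[F] F}
    (hf : LinearIndependent F f) {Z : Finset V} (hZ : ∀ i, ∀ z ∈ Z, f i z = 0) :
    #Z ≤ Fintype.card F ^ (finrank F V - Fintype.card ι) := by
  have := Fintype.ofFinite V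
  rcases Z.eq_empty_or_nonempty with rfl | ⟨x₀, hx₀⟩
  · exact card_empty.trans_le (Nat.zero_le _)
  have hlinear (i : ι) (x : V) : (f i).linear (x - x₀) = f i x := by
    simpa [hZ i x₀ hx₀] using (f i).linearMap_vsub x x₀
  have hindep : LinearIndependent F fun i ↦ (f i).linear := by
    rw [Fintype.linearIndependent_iff] at hf ⊢
    refine fun c hc ↦ hf c (AffineMap.ext fun x ↦ ?_)
    calc (∑ i, c i • f i) x = affineEval F x (∑ i, c i • f i) := rfl
      _ = ∑ i, c i * f i x := by simp only [map_sum, map_smul, smul_eq_mul]; rfl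
      _ = (∑ i, c i • (f i).linear) (x - x₀) := by
        simp only [LinearMap.sum_apply, LinearMap.smul_apply, smul_eq_mul, hlinear]
      _ = 0 := by rw [hc, LinearMap.zero_apply]
  set W := (Submodule.span F (Set.range fun i ↦ (f i).linear)).dualCoannihilator
  have hW : finrank F W = finrank F V - Fintype.card ι := by
    have := Subspace.finrank_add_finrank_dualCoannihilator_eq
      (Submodule.span F (Set.range fun i ↦ (f i).linear))
    rw [finrank_span_eq_card hindep] at this
    exact (Nat.sub_eq_of_eq_add' this.symm).symm
  rw [← hW, ← Module.card_eq_pow_finrank, ← Fintype.card_coe]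
  refine Fintype.card_le_of_injective
    (fun x : Z ↦ ⟨x.1 - x₀, (Submodule.mem_dualCoannihilator _).2 fun φ hφ ↦ ?_⟩)
    fun x y hxy ↦ Subtype.ext (sub_left_injective (congrArg Subtype.val hxy))
  induction hφ using Submodule.span_induction with
  | mem φ hφ => obtain ⟨i, rfl⟩ := hφ; exact (hlinear i x).trans (hZ i x x.2)
  | zero => rfl
  | add φ ψ _ _ hφ hψ => rw [LinearMap.add_apply, hφ, hψ, add_zero]
  | smul c φ _ hφ => rw [LinearMap.smul_apply, hφ, smul_zero]

end GeneralPosition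

section Pencil

variable {F V : Type*} [Field F] [AddCommGroup V] [Module F V]

/-- A pencil of hyperplanes through the finite set `I`, parametrized by the projective line
`Option F`; `color x` selects a member of the pencil passing through `x`. -/
structure Pencil (F : Type*) {V : Type*} [Field F] [AddCommGroup V] [Module F V]
    (I : Finset V) where
  member : Option F → V →ᵃ[F] F
  member_ne_zero : ∀ k, member k ≠ 0
  member_apply_eq_zero : ∀ k, ∀ z ∈ I, member k z = 0
  color : V → Option F
  member_color : ∀ x, member (color x) x = 0

theorem nonempty_pencil [FiniteDimensional F V] {I : Finset V} (hI : #I < finrank F V) :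
    Nonempty (Pencil F I) := by
  let eval : (V →ᵃ[F] F) →ₗ[F] (I → F) := LinearMap.pi fun z ↦ affineEval F z.1
  have hker : 1 < finrank F (LinearMap.ker eval) := by
    have hrank := eval.finrank_range_add_finrank_ker
    have hrange := eval.range.finrank_le
    rw [finrank_fintype_fun_eq_card, Fintype.card_coe] at hrange
    rw [AffineMap.finrank_eq, finrank_self, mul_one] at hrank
    omega
  obtain ⟨u, hu⟩ := finrank_pos_iff_exists_ne_zero.1 (zero_lt_one.trans hker)
  obtain ⟨v, huv⟩ := exists_linearIndependent_pair_of_one_lt_finrank hker hu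
  have hker_apply (w : LinearMap.ker eval) (z : V) (hz : z ∈ I) : (w : V →ᵃ[F] F) z = 0 :=
    congrFun (LinearMap.mem_ker.1 w.2) ⟨z, hz⟩
  refine ⟨{
    member k := k.elim u fun r ↦ (v - r • u : LinearMap.ker eval)
    member_ne_zero k := ?_
    member_apply_eq_zero k := ?_
    color x := if u.1 x = 0 then none else some (v.1 x / u.1 x)
    member_color x := ?_ }⟩
  · cases k with
    | none => exact Submodule.coe_eq_zero.not.2 hu
    | some r =>
      exact Submodule.coe_eq_zero.not.2
        (sub_ne_zero.2 ((LinearIndependent.pair_iff' hu).1 huv r).symm)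
  · cases k with
    | none => exact hker_apply u
    | some r => exact hker_apply (v - r • u)
  · split_ifs with hux
    · exact hux
    · change v.1 x - v.1 x / u.1 x * u.1 x = 0
      rw [div_mul_cancel₀ _ hux, sub_self]

theorem InGeneralPosition.card_le_finrank_mul [Fintype F] [FiniteDimensional F V]
    {P : Finset V} (hP : InGeneralPosition F P) (hV : 0 < finrank F V) :
    #P ≤ finrank F V * (Fintype.card F + 1) := by
  obtain ⟨Λ⟩ := nonempty_pencil (F := F) (V := V) (I := ∅) (by simpa using hV)
  rw [← Fintype.card_option, ← card_univ]
  refine card_le_mul_card_image_of_maps_to (fun x _ ↦ mem_univ (Λ.color x)) _ fun k _ ↦ ?_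
  refine hP.card_le (Λ.member_ne_zero k) (filter_subset _ P) fun z hz ↦ ?_
  rw [← (mem_filter.1 hz).2, Λ.member_color]

theorem linearIndependent_member_color {I J : Finset V} (Λ : Pencil F I) (Λ' : Pencil F J)
    (hIJ : I ≠ J) (hI : #I + 1 = finrank F V) (hJ : #J + 1 = finrank F V) {x : V}
    (hx : x ∉ I ∪ J) (hgp : InGeneralPosition F (insert x (I ∪ J))) :
    LinearIndependent F ![Λ.member (Λ.color x), Λ'.member (Λ'.color x)] := by
  rw [LinearIndependent.pair_iff' (Λ.member_ne_zero _)]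
  intro a ha
  have hcard : finrank F V < #(insert x (I ∪ J)) := by
    have hlt : #I < #(I ∪ J) := card_lt_card <| ssubset_of_subset_of_ne subset_union_left fun h ↦
      hIJ (eq_of_subset_of_card_le (h ▸ subset_union_right : J ⊆ I) (by omega)).symm
    rw [card_insert_of_notMem hx]
    omega
  refine hcard.not_ge (hgp.card_le (Λ'.member_ne_zero (Λ'.color x)) Subset.rfl fun z hz ↦ ?_)
  rw [mem_insert, mem_union] at hz
  rcases hz with rfl | hzI | hzJ
  · exact Λ'.member_color z
  · rw [← ha, AffineMap.coe_smul, Pi.smul_apply, Λ.member_apply_eq_zero _ z hzI, smul_zero]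
  · exact Λ'.member_apply_eq_zero _ z hzJ

end Pencil

section PencilGraph

variable {F V ι : Type*} [Field F] [AddCommGroup V] [Module F V] {I : ι → Finset V}
  (Λ : ∀ i, Pencil F (I i)) {R : Finset V}

/-- The graph joining two distinct points that receive the same color from one of the pencils, that
is, span together with the base of this pencil no more than a hyperplane. -/
def pencilGraph : SimpleGraph V where
  Adj x y := x ≠ y ∧ ∃ i, (Λ i).color x = (Λ i).color y
  symm := ⟨fun _ _ h ↦ ⟨h.1.symm, h.2.imp fun _ ↦ Eq.symm⟩⟩
  loopless := ⟨fun _ h ↦ h.1 rfl⟩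

theorem isIndepSet_pencilGraph {J : Finset V} (hRJ : Disjoint R J)
    (hgp : InGeneralPosition F (R ∪ J)) (hIR : ∀ i, I i ⊆ R)
    (hI : ∀ i, #(I i) + 1 = finrank F V) : (pencilGraph Λ).IsIndepSet (J : Set V) := by
  rintro x hx y hy hxy ⟨-, i, hi⟩
  rw [mem_coe] at hx hy
  have hyI : y ∉ I i := fun h ↦ disjoint_left.1 hRJ (hIR i h) hy
  have hxI : x ∉ insert y (I i) := fun h ↦ (mem_insert.1 h).elim hxy fun h ↦
    disjoint_left.1 hRJ (hIR i h) hx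
  have hsub : insert x (insert y (I i)) ⊆ R ∪ J :=
    insert_subset (mem_union_right R hx) <| insert_subset (mem_union_right R hy) <|
      (hIR i).trans subset_union_left
  have hcard := hgp.card_le ((Λ i).member_ne_zero ((Λ i).color x)) hsub fun z hz ↦ by
    rw [mem_insert, mem_insert] at hz
    rcases hz with rfl | rfl | hz
    · exact (Λ i).member_color z
    · rw [hi, (Λ i).member_color]
    · exact (Λ i).member_apply_eq_zero _ z hz
  rw [card_insert_of_notMem hxI, card_insert_of_notMem hyI, hI i] at hcard
  omega

theorem sum_card_color_class_le [Fintype F] [Finite V] [Fintype ι] (hinj : I.Injective)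
    (hIR : ∀ i, I i ⊆ R) (hI : ∀ i, #(I i) + 1 = finrank F V) {x : V} (hx : x ∉ R)
    (hgp : InGeneralPosition F (insert x R)) (A : Finset V) :
    ∑ i, #{y ∈ A | (Λ i).color y = (Λ i).color x} ≤
      #{y ∈ A | (pencilGraph Λ).Adj x y} + 1 +
        Fintype.card ι ^ 2 * Fintype.card F ^ (finrank F V - 2) := by
  have := Fintype.ofFinite V
  refine (sum_card_le_card_biUnion_add univ _
    (M := Fintype.card F ^ (finrank F V - 2)) fun i _ j _ hij ↦ ?_).trans ?_
  · have hunion : I i ∪ I j ⊆ R := union_subset (hIR i) (hIR j)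
    have hindep := linearIndependent_member_color (Λ i) (Λ j) (hinj.ne hij) (hI i) (hI j)
      (fun h ↦ hx (hunion h)) (hgp.mono (insert_subset_insert x hunion))
    rw [← Fintype.card_fin 2]
    refine card_common_zeros_le hindep (Fin.forall_fin_two.2 ⟨fun y hy ↦ ?_, fun y hy ↦ ?_⟩)
    · exact (mem_filter.1 (mem_inter.1 hy).1).2 ▸ (Λ i).member_color y
    · exact (mem_filter.1 (mem_inter.1 hy).2).2 ▸ (Λ j).member_color y
  · rw [card_univ]
    gcongr
    refine (card_le_card fun y hy ↦ ?_).trans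
      (card_insert_le x {y ∈ A | (pencilGraph Λ).Adj x y})
    obtain ⟨i, -, hyi⟩ := mem_biUnion.1 hy
    rw [mem_filter] at hyi
    rw [mem_insert, mem_filter]
    exact or_iff_not_imp_left.2 fun hyx ↦ ⟨hyi.1, Ne.symm hyx, i, hyi.2.symm⟩

theorem card_mul_sq_card_le_sum_card_adj [Fintype F] [Finite V] [Fintype ι]
    (hinj : I.Injective) (hIR : ∀ i, I i ⊆ R) (hI : ∀ i, #(I i) + 1 = finrank F V) {A : Finset V}
    (hA : ∀ x ∈ A, x ∉ R ∧ InGeneralPosition F (insert x R)) :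
    Fintype.card ι * #A ^ 2 ≤ (Fintype.card F + 1) *
      ∑ x ∈ A, (#{y ∈ A | (pencilGraph Λ).Adj x y} + 1 +
        Fintype.card ι ^ 2 * Fintype.card F ^ (finrank F V - 2)) := by
  calc Fintype.card ι * #A ^ 2 = ∑ _i : ι, #A ^ 2 := by rw [sum_const, card_univ, smul_eq_mul]
    _ ≤ ∑ i, (Fintype.card F + 1) * ∑ x ∈ A, #{y ∈ A | (Λ i).color y = (Λ i).color x} := by
        gcongr with i
        rw [← Fintype.card_option]
        exact sq_card_le_card_mul_sum_card_fiber A (Λ i).color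
    _ = (Fintype.card F + 1) * ∑ x ∈ A, ∑ i, #{y ∈ A | (Λ i).color y = (Λ i).color x} := by
        rw [← mul_sum, sum_comm]
    _ ≤ _ := by
        gcongr with x hx
        exact sum_card_color_class_le Λ hinj hIR hI (hA x hx).1 (hA x hx).2 A

theorem add_one_add_lt_mul_div {q T a e : ℝ} {n : ℕ} (hq : 1 ≤ q) (hT : 1 ≤ T)
    (ha : 8 * T * q ^ (n + 1) < a) (he : e < T / (4 * q) * a) :
    e + 1 + T ^ 2 * q ^ n < T * a / (2 * q) := by
  have hone : 8 * q ≤ T * a := by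
    calc 8 * q = 1 * (8 * 1 * q ^ 1) := by ring
      _ ≤ T * (8 * T * q ^ (n + 1)) := by gcongr; omega
      _ ≤ T * a := by gcongr
  have hcoincidences : 8 * q * (T ^ 2 * q ^ n) < T * a := by
    calc 8 * q * (T ^ 2 * q ^ n) = T * (8 * T * q ^ (n + 1)) := by ring
      _ < T * a := by gcongr
  rw [div_mul_eq_mul_div, lt_div_iff₀ (by positivity)] at he
  rw [lt_div_iff₀ (by positivity)]
  linarith

theorem exists_le_card_pencilGraph_adj [Fintype F] [Finite V] [Fintype ι] [Nonempty ι]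
    (hV : 2 ≤ finrank F V) (hinj : I.Injective) (hIR : ∀ i, I i ⊆ R)
    (hI : ∀ i, #(I i) + 1 = finrank F V) {A : Finset V}
    (hA : ∀ x ∈ A, x ∉ R ∧ InGeneralPosition F (insert x R))
    (hcard : 8 * Fintype.card ι * Fintype.card F ^ (finrank F V - 1) < #A) :
    ∃ x ∈ A, (Fintype.card ι / (4 * Fintype.card F) : ℝ) * #A ≤
      #{y ∈ A | (pencilGraph Λ).Adj x y} := by
  by_contra! hlt
  obtain ⟨n, hn⟩ := Nat.exists_eq_add_of_le' hV
  have hsum := card_mul_sq_card_le_sum_card_adj Λ hinj hIR hI hA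
  rw [show finrank F V - 2 = n by omega] at hsum
  rw [show finrank F V - 1 = n + 1 by omega] at hcard
  set q := Fintype.card F
  set T := Fintype.card ι
  have hq : (1 : ℝ) ≤ q := by exact_mod_cast Fintype.card_pos
  have hT : (1 : ℝ) ≤ T := by exact_mod_cast Fintype.card_pos
  have ha : (0 : ℝ) < #A := by exact_mod_cast (Nat.zero_le _).trans_lt hcard
  have hcard' : 8 * T * (q : ℝ) ^ (n + 1) < #A := by exact_mod_cast hcard
  have hpoint (x : V) (hx : x ∈ A) :
      (#{y ∈ A | (pencilGraph Λ).Adj x y} + 1 + T ^ 2 * q ^ n : ℝ) < T * #A / (2 * q) :=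
    add_one_add_lt_mul_div hq hT hcard' (hlt x hx)
  refine lt_irrefl (T * (#A : ℝ) ^ 2) ?_
  calc T * (#A : ℝ) ^ 2
      ≤ (q + 1) * ∑ x ∈ A, (#{y ∈ A | (pencilGraph Λ).Adj x y} + 1 + T ^ 2 * q ^ n : ℝ) := by
        exact_mod_cast hsum
    _ < (q + 1) * ∑ _x ∈ A, (T * #A / (2 * q) : ℝ) := by
        gcongr
        exacts [card_pos.1 (by exact_mod_cast ha), hpoint _ ‹_›]
    _ = (q + 1) / (2 * q) * (T * (#A : ℝ) ^ 2) := by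
        rw [sum_const, nsmul_eq_mul]
        ring
    _ ≤ 1 * (T * (#A : ℝ) ^ 2) := by
        gcongr
        rw [div_le_one (by positivity)]
        linarith
    _ = T * (#A : ℝ) ^ 2 := one_mul _

end PencilGraph

section Counting

variable {F V : Type*} [Field F] [Fintype F] [AddCommGroup V] [Module F V] [Fintype V]
  {t j T E : ℕ} {lam : ℝ}

theorem card_inGeneralPosition_union_mul_pow_le {R : Finset V} (hV : 2 ≤ finrank F V)
    (hT : T ≠ 0) (hTR : T ≤ (#R).choose (finrank F V - 1)) (hE : E ≠ 0) (hlam : 0 ≤ lam)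
    (hsmall : Fintype.card V * lam * Real.exp (-(T / (4 * Fintype.card F) * E)) ≤ 1) :
    #{J ∈ powersetCard j Rᶜ | InGeneralPosition F (R ∪ J)} * lam ^ j ≤
      (1 + lam) ^ (8 * T * Fintype.card F ^ (finrank F V - 1)) * (Fintype.card V + 1 : ℝ) ^ E := by
  obtain ⟨C, hCR, hC⟩ := exists_subset_card_eq (hTR.trans_eq (card_powersetCard _ R).symm)
  have hI (I : C) : #I.1 + 1 = finrank F V := by
    rw [(mem_powersetCard.1 (hCR I.2)).2]
    omega
  have hIR (I : C) : I.1 ⊆ R := (mem_powersetCard.1 (hCR I.2)).1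
  let Λ (I : C) : Pencil F I.1 := (nonempty_pencil (by have := hI I; omega)).some
  have : Nonempty C := (card_ne_zero.1 (hC ▸ hT)).to_subtype
  let A₀ : Finset V := {x | x ∉ R ∧ InGeneralPosition F (insert x R)}
  have hA₀ : (#A₀ : ℝ) ≤ Fintype.card V := by exact_mod_cast card_le_univ A₀
  have hindep : {J ∈ powersetCard j Rᶜ | InGeneralPosition F (R ∪ J)} ⊆
      {J ∈ A₀.powerset | (pencilGraph Λ).IsIndepSet (J : Set V)} := by
    intro J hJ
    rw [mem_filter, mem_powersetCard] at hJ
    have hRJ : Disjoint R J := disjoint_compl_right.mono_right hJ.1.1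
    refine mem_filter.2 ⟨mem_powerset.2 fun x hx ↦ mem_filter.2
      ⟨mem_univ x, disjoint_right.1 hRJ hx, hJ.2.mono ?_⟩,
      isIndepSet_pencilGraph Λ hRJ hJ.2 hIR hI⟩
    exact insert_subset (mem_union_right R hx) subset_union_left
  calc #{J ∈ powersetCard j Rᶜ | InGeneralPosition F (R ∪ J)} * lam ^ j
      = ∑ J ∈ powersetCard j Rᶜ with InGeneralPosition F (R ∪ J), lam ^ #J := by
        rw [← nsmul_eq_mul, ← sum_const]
        exact sum_congr rfl fun J hJ ↦ by rw [(mem_powersetCard.1 (mem_filter.1 hJ).1).2]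
    _ ≤ hardCorePartition (pencilGraph Λ) lam A₀ :=
        sum_le_sum_of_subset_of_nonneg hindep fun _ _ _ ↦ by positivity
    _ ≤ (1 + lam) ^ (8 * T * Fintype.card F ^ (finrank F V - 1)) * (#A₀ + 1 : ℝ) ^ E := by
        refine hardCorePartition_le (β := T / (4 * Fintype.card F)) _ hlam hE
          (fun A hA hcard ↦ ?_) (le_trans (by gcongr) hsmall)
        rw [← hC, ← Fintype.card_coe] at hcard ⊢
        exact exists_le_card_pencilGraph_adj Λ hV Subtype.val_injective hIR hI
          (fun x hx ↦ (mem_filter.1 (hA hx)).2) hcard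
    _ ≤ _ := by gcongr

theorem card_inGeneralPosition_mul_pow_le (hV : 2 ≤ finrank F V) (hT : T ≠ 0)
    (hTt : T ≤ t.choose (finrank F V - 1)) (hE : E ≠ 0) (hlam : 0 ≤ lam)
    (hsmall : Fintype.card V * lam * Real.exp (-(T / (4 * Fintype.card F) * E)) ≤ 1) :
    #{P : Finset V | #P = t + j ∧ InGeneralPosition F P} * lam ^ j ≤
      (Fintype.card V : ℝ) ^ t * ((1 + lam) ^ (8 * T * Fintype.card F ^ (finrank F V - 1)) *
        (Fintype.card V + 1 : ℝ) ^ E) := by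
  set 𝒰 : Finset (Finset V) := {P | #P = t + j ∧ InGeneralPosition F P}
  set bound := (1 + lam) ^ (8 * T * Fintype.card F ^ (finrank F V - 1)) *
    (Fintype.card V + 1 : ℝ) ^ E
  calc #𝒰 * lam ^ j
      ≤ (∑ R ∈ powersetCard t univ, #{J ∈ powersetCard j Rᶜ | R ∪ J ∈ 𝒰} : ℕ) * lam ^ j := by
        gcongr
        exact card_le_sum_powersetCard 𝒰 fun P hP ↦ (mem_filter.1 hP).2.1
    _ = ∑ R ∈ powersetCard t univ, #{J ∈ powersetCard j Rᶜ | R ∪ J ∈ 𝒰} * lam ^ j := by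
        rw [Nat.cast_sum, sum_mul]
    _ ≤ ∑ _R ∈ powersetCard t (univ : Finset V), bound := by
        refine sum_le_sum fun R hR ↦ le_trans ?_ <| card_inGeneralPosition_union_mul_pow_le
          (R := R) (j := j) hV hT ((mem_powersetCard.1 hR).2 ▸ hTt) hE hlam hsmall
        gcongr with J
        exact fun hJ ↦ (mem_filter.1 hJ).2.2
    _ = (Fintype.card V).choose t * bound := by
        rw [sum_const, card_powersetCard, card_univ, nsmul_eq_mul]
    _ ≤ (Fintype.card V : ℝ) ^ t * bound := by
        gcongr
        exact_mod_cast Nat.choose_le_pow (Fintype.card V) t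

theorem bernoulliProb_inGeneralPosition_mul_pow_le {p a : ℝ} (hp0 : 0 ≤ p) (hp1 : p ≤ 1)
    (ha : 0 ≤ a) (hV : 2 ≤ finrank F V) (hT : T ≠ 0) (hTt : T ≤ t.choose (finrank F V - 1))
    (hE : E ≠ 0)
    (hsmall : Fintype.card V * (a * p) * Real.exp (-(T / (4 * Fintype.card F) * E)) ≤ 1) :
    bernoulliProb V p (fun S ↦ ∃ P ⊆ S, InGeneralPosition F P ∧ t + j ≤ #P) * a ^ j ≤
      (Fintype.card V : ℝ) ^ t * ((1 + a * p) ^ (8 * T * Fintype.card F ^ (finrank F V - 1)) *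
        (Fintype.card V + 1 : ℝ) ^ E) := by
  set 𝒰 : Finset (Finset V) := {P | #P = t + j ∧ InGeneralPosition F P}
  have hprob : bernoulliProb V p (fun S ↦ ∃ P ⊆ S, InGeneralPosition F P ∧ t + j ≤ #P) ≤
      #𝒰 * p ^ j := by
    calc bernoulliProb V p (fun S ↦ ∃ P ⊆ S, InGeneralPosition F P ∧ t + j ≤ #P)
        ≤ ∑ P ∈ 𝒰, p ^ #P := by
          refine bernoulliProb_le_sum_pow hp0 hp1 fun S ⟨P, hPS, hP, hcard⟩ ↦ ?_
          obtain ⟨U, hUP, hU⟩ := exists_subset_card_eq hcard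
          exact ⟨U, mem_filter.2 ⟨mem_univ U, hU, hP.mono hUP⟩, hUP.trans hPS⟩
      _ ≤ ∑ _P ∈ 𝒰, p ^ j := by
          refine sum_le_sum fun P hP ↦ ?_
          rw [(mem_filter.1 hP).2.1]
          exact pow_le_pow_of_le_one hp0 hp1 (Nat.le_add_left j t)
      _ = #𝒰 * p ^ j := by rw [sum_const, nsmul_eq_mul]
  calc _ ≤ #𝒰 * p ^ j * a ^ j := by gcongr
    _ = #𝒰 * (a * p) ^ j := by ring
    _ ≤ _ := card_inGeneralPosition_mul_pow_le hV hT hTt hE (mul_nonneg ha hp0) hsmall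

end Counting

section Parameters

theorem div_two_mul_pow_le_choose {t r : ℕ} (hrt : 2 * r ≤ t + 2) :
    ((t : ℝ) / (2 * r)) ^ r ≤ t.choose r := by
  have hhalf : (t : ℝ) / 2 ≤ (t + 1 - r : ℕ) := by
    rw [div_le_iff₀ two_pos]
    exact_mod_cast (by omega : t ≤ (t + 1 - r) * 2)
  calc ((t : ℝ) / (2 * r)) ^ r = (t / 2) ^ r / (r : ℝ) ^ r := by rw [← div_div, div_pow]
    _ ≤ (t + 1 - r : ℕ) ^ r / (r.factorial : ℝ) := by
        gcongr
        exact_mod_cast r.factorial_le_pow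
    _ ≤ t.choose r := Nat.pow_le_choose r t

theorem mul_le_mul_choose {d q t : ℕ} {L : ℝ} (hd : 2 ≤ d) (hq : 1 ≤ q) (hL : 1 ≤ L)
    (ht : 8 * d * (q : ℝ) ^ (1 / (d : ℝ)) * L ≤ t) :
    8 * (d + 1) * q * L ≤ t * t.choose (d - 1) := by
  obtain ⟨r, rfl⟩ := Nat.exists_eq_add_of_le' (one_le_two.trans hd)
  have hr : (1 : ℝ) ≤ r := by exact_mod_cast Nat.le_of_succ_le_succ hd
  have hroot : (1 : ℝ) ≤ (q : ℝ) ^ (1 / ((r + 1 : ℕ) : ℝ)) :=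
    Real.one_le_rpow (by exact_mod_cast hq) (by positivity)
  have hrt : 2 * r ≤ t + 2 := by
    have : (8 * (r + 1 : ℕ) * 1 * 1 : ℝ) ≤ t := by refine le_trans ?_ ht; gcongr
    rw [mul_one, mul_one] at this
    have : 8 * (r + 1) ≤ t := by exact_mod_cast this
    omega
  set u := (q : ℝ) ^ (1 / ((r + 1 : ℕ) : ℝ))
  have hu : u ^ (r + 1) = q := by
    rw [← Real.rpow_natCast, ← Real.rpow_mul q.cast_nonneg, one_div_mul_cancel, Real.rpow_one]
    positivity
  push_cast at ht ⊢
  have hbase : 4 * (u * L) ≤ (t : ℝ) / (2 * (r + 1)) := by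
    rw [le_div_iff₀ (by positivity)]
    linarith
  calc 8 * (r + 1 + 1) * q * L ≤ 32 * (r + 1) * q * L := by
        gcongr ?_ * q * L
        linarith
    _ = 2 * (r + 1) * (4 ^ (1 + 1) * (q * L ^ 1)) := by ring
    _ ≤ 2 * (r + 1) * (4 ^ (r + 1) * (q * L ^ (r + 1))) := by
        gcongr
        · norm_num
        · omega
    _ = 2 * (r + 1) * (4 * (u * L)) ^ (r + 1) := by rw [← hu]; ring
    _ ≤ 2 * (r + 1) * (t / (2 * (r + 1))) ^ (r + 1) := by gcongr
    _ = t * (t / (2 * (r + 1))) ^ r := by rw [pow_succ]; field_simp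
    _ ≤ t * (t / (2 * r)) ^ r := by gcongr; linarith
    _ ≤ t * t.choose (r + 1 - 1) := by gcongr; exact div_two_mul_pow_le_choose hrt

theorem exists_natCast_mul_le_two_mul {s B : ℝ} (hs : 0 < s) (hsB : s ≤ B) :
    ∃ T : ℕ, T ≠ 0 ∧ B ≤ T * s ∧ T * s ≤ 2 * B := by
  have hB : 0 < B := hs.trans_le hsB
  refine ⟨⌈B / s⌉₊, (Nat.ceil_pos.2 (by positivity)).ne', (div_le_iff₀ hs).1 (Nat.le_ceil _), ?_⟩
  calc ⌈B / s⌉₊ * s ≤ (B / s + 1) * s := by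
        gcongr
        exact (Nat.ceil_lt_add_one (by positivity)).le
    _ = B + s := by field_simp
    _ ≤ 2 * B := by linarith

theorem exists_fingerprint_parameters {d q m : ℕ} {L : ℝ} (hd : 2 ≤ d) (hq : 1 ≤ q)
    (hL : 8 * d ≤ L) (hm : 16 * d * (q : ℝ) ^ (1 / (d : ℝ)) * L ^ 2 ≤ m)
    (hmq : m ≤ d * (q + 1)) :
    ∃ t j T : ℕ, t + j = m ∧ t ≠ 0 ∧ T ≠ 0 ∧ t * L ≤ m ∧ m ≤ 2 * j ∧ T ≤ t.choose (d - 1) ∧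
      4 * (d + 1) * q * L ≤ T * t ∧ T * m ≤ 16 * (d + 1) * q * L ^ 2 := by
  have hd' : (2 : ℝ) ≤ d := by exact_mod_cast hd
  have hq' : (1 : ℝ) ≤ q := by exact_mod_cast hq
  have hL0 : 0 < L := by linarith
  have hroot : (1 : ℝ) ≤ (q : ℝ) ^ (1 / (d : ℝ)) := Real.one_le_rpow hq' (by positivity)
  set u := (q : ℝ) ^ (1 / (d : ℝ))
  set t := ⌊m / L⌋₊
  have htL : t * L ≤ m := (le_div_iff₀ hL0).1 (Nat.floor_le (by positivity))
  have hmt : m ≤ 2 * t * L := by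
    have hfloor : (m : ℝ) < (t + 1) * L := (div_lt_iff₀ hL0).1 (Nat.lt_floor_add_one _)
    have : 2 * L ≤ m := by
      calc 2 * L ≤ 16 * 2 * 1 * (1 * L) := by linarith
        _ ≤ 16 * d * u * (L * L) := by gcongr; linarith
        _ ≤ m := by linarith
    linarith
  have ht : 8 * d * u * L ≤ t := by
    refine le_of_mul_le_mul_right ?_ hL0
    linarith
  have ht0 : (0 : ℝ) < t := lt_of_lt_of_le (by positivity) ht
  have htq : (t : ℝ) ≤ q := by
    have hmq' : (m : ℝ) ≤ d * (q + 1) := by exact_mod_cast hmq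
    refine le_of_mul_le_mul_right (htL.trans ?_) hL0
    nlinarith
  have htB : (t : ℝ) ≤ 4 * (d + 1) * q * L := by
    calc (t : ℝ) ≤ 1 * q * 1 := by linarith
      _ ≤ 4 * (d + 1) * q * L := by gcongr <;> linarith
  obtain ⟨T, hT, hTlower, hTupper⟩ := exists_natCast_mul_le_two_mul ht0 htB
  have htm : 2 * t ≤ m := by
    have : (2 * t : ℝ) ≤ m := by nlinarith
    exact_mod_cast this
  refine ⟨t, m - t, T, by omega, by exact_mod_cast ht0.ne', hT, htL, by omega, ?_, hTlower, ?_⟩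
  · have := mul_le_mul_choose hd hq (by linarith) ht
    exact_mod_cast le_of_mul_le_mul_right
      (show (T * t : ℝ) ≤ t.choose (d - 1) * t by linarith) ht0
  · calc T * m ≤ T * (2 * t * L) := by gcongr
      _ = 2 * L * (T * t) := by ring
      _ ≤ 2 * L * (2 * (4 * (d + 1) * q * L)) := by gcongr
      _ = 16 * (d + 1) * q * L ^ 2 := by ring

theorem natCast_pow_le_two_pow {q t m : ℕ} (hq : 0 < q) (h : t * Real.logb 2 q ≤ m) :
    (q : ℝ) ^ t ≤ 2 ^ m := by
  have : (0 : ℝ) < q := by exact_mod_cast hq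
  rw [← Real.rpow_natCast 2 m, ← Real.logb_le_iff_le_rpow one_lt_two (by positivity),
    Real.logb_pow]
  exact h

theorem one_add_pow_le_four_pow {x : ℝ} {s m : ℕ} (hx : 0 ≤ x) (h : x * s ≤ m) :
    (1 + x) ^ s ≤ 4 ^ m := by
  calc (1 + x) ^ s ≤ Real.exp x ^ s := by gcongr; linarith [Real.add_one_le_exp x]
    _ ≤ Real.exp m := by
        rw [← Real.exp_nat_mul, mul_comm]
        exact Real.exp_le_exp.2 h
    _ = Real.exp 1 ^ m := by rw [← Real.exp_nat_mul, mul_one]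
    _ ≤ 4 ^ m := by gcongr; linarith [Real.exp_one_lt_d9]

theorem exp_neg_le_inv_pow {d q t T : ℕ} (hq : 1 ≤ q)
    (h : 4 * (d + 1) * q * Real.logb 2 q ≤ T * t) :
    Real.exp (-(T / (4 * q) * t)) ≤ ((q : ℝ) ^ (d + 1))⁻¹ := by
  have hq' : (1 : ℝ) ≤ q := by exact_mod_cast hq
  have hlog : Real.log q ≤ Real.logb 2 q :=
    le_div_self (Real.log_nonneg hq') (Real.log_pos one_lt_two) (by linarith [Real.log_two_lt_d9])
  have hexponent : (d + 1 : ℕ) * Real.log q ≤ T / (4 * q) * t := by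
    rw [div_mul_eq_mul_div, le_div_iff₀ (by positivity)]
    push_cast
    calc (d + 1) * Real.log q * (4 * q) ≤ (d + 1) * Real.logb 2 q * (4 * q) := by gcongr
      _ ≤ T * t := by linarith
  rw [Real.exp_neg]
  gcongr
  calc (q : ℝ) ^ (d + 1) = Real.exp ((d + 1 : ℕ) * Real.log q) := by
        rw [Real.exp_nat_mul, Real.exp_log (by positivity)]
    _ ≤ _ := Real.exp_le_exp.2 hexponent

theorem pow_mul_mul_exp_neg_le_one {d q t T : ℕ} {p : ℝ} (hd : 2 ≤ d) (hq : 2 ^ (8 * d) ≤ q)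
    (hp0 : 0 ≤ p) (hp1 : p ≤ 1) (h : 4 * (d + 1) * q * Real.logb 2 q ≤ T * t) :
    (q : ℝ) ^ d * (4 ^ (2 * d + 4) * p) * Real.exp (-(T / (4 * q) * t)) ≤ 1 := by
  have hq1 : 1 ≤ q := Nat.one_le_two_pow.trans hq
  have : (0 : ℝ) < q := by exact_mod_cast hq1
  have hconst : (4 : ℝ) ^ (2 * d + 4) ≤ q := by
    calc (4 : ℝ) ^ (2 * d + 4) = 2 ^ (2 * (2 * d + 4)) := by rw [pow_mul]; norm_num
      _ ≤ 2 ^ (8 * d) := pow_le_pow_right₀ one_le_two (by omega)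
      _ ≤ q := by exact_mod_cast hq
  calc (q : ℝ) ^ d * (4 ^ (2 * d + 4) * p) * Real.exp (-(T / (4 * q) * t))
      ≤ q ^ d * (q * 1) * ((q : ℝ) ^ (d + 1))⁻¹ := by
        gcongr
        exact exp_neg_le_inv_pow hq1 h
    _ = 1 := by rw [mul_one, ← pow_succ, mul_inv_cancel₀ (by positivity)]

theorem pow_mul_one_add_pow_mul_pow_le {d q t T m : ℕ} {x : ℝ} (hd : 1 ≤ d) (hq : 2 ≤ q)
    (hm : 0 < m) (hx : 0 ≤ x) (ht : t * Real.logb 2 q ≤ m)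
    (hT : T * m ≤ 16 * (d + 1) * q * Real.logb 2 q ^ 2)
    (hxm : 128 * (d + 1) * (x * (q : ℝ) ^ d * Real.logb 2 q ^ 2) ≤ m ^ 2) :
    ((q : ℝ) ^ d) ^ t * ((1 + x) ^ (8 * T * q ^ (d - 1)) * ((q : ℝ) ^ d + 1) ^ t) ≤
      2 ^ ((2 * d + 3) * m) := by
  have hq' : (2 : ℝ) ≤ q := by exact_mod_cast hq
  have hm' : (0 : ℝ) < m := by exact_mod_cast hm
  have hqt : (q : ℝ) ^ t ≤ 2 ^ m := natCast_pow_le_two_pow (two_pos.trans_le hq) ht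
  have hx_mul : x * (8 * T * q ^ (d - 1) : ℕ) ≤ m := by
    refine le_of_mul_le_mul_right ?_ hm'
    push_cast
    calc x * (8 * T * q ^ (d - 1)) * m = 8 * x * q ^ (d - 1) * (T * m) := by ring
      _ ≤ 8 * x * q ^ (d - 1) * (16 * (d + 1) * q * Real.logb 2 q ^ 2) := by gcongr
      _ = 128 * (d + 1) * (x * q ^ (d - 1 + 1) * Real.logb 2 q ^ 2) := by ring
      _ ≤ m * m := by rw [Nat.sub_add_cancel hd, ← sq]; exact hxm
  have hsucc : (q : ℝ) ^ d + 1 ≤ q ^ (d + 1) := by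
    have : (1 : ℝ) ≤ q ^ d := one_le_pow₀ (by linarith)
    rw [pow_succ]
    nlinarith
  calc ((q : ℝ) ^ d) ^ t * ((1 + x) ^ (8 * T * q ^ (d - 1)) * ((q : ℝ) ^ d + 1) ^ t)
      ≤ ((q : ℝ) ^ d) ^ t * (4 ^ m * ((q : ℝ) ^ (d + 1)) ^ t) := by
        gcongr
        exact one_add_pow_le_four_pow hx hx_mul
    _ = ((q : ℝ) ^ t) ^ (2 * d + 1) * 4 ^ m := by ring
    _ ≤ (2 ^ m) ^ (2 * d + 1) * 4 ^ m := by gcongr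
    _ = 2 ^ ((2 * d + 3) * m) := by
        rw [show (4 : ℝ) ^ m = 2 ^ (2 * m) by rw [pow_mul]; norm_num, ← pow_mul, ← pow_add]
        congr 1
        ring

theorem le_inv_of_mul_four_pow_le {x y : ℝ} {k j m : ℕ} (hy : 0 < y) (hym : y ≤ 2 ^ m)
    (hmj : m ≤ 2 * j) (h : x * (4 ^ (k + 1)) ^ j ≤ 2 ^ (k * m)) : x ≤ y⁻¹ := by
  have hpow : (2 : ℝ) ^ (k * m) * 2 ^ m ≤ (4 ^ (k + 1)) ^ j := by
    calc (2 : ℝ) ^ (k * m) * 2 ^ m = 2 ^ ((k + 1) * m) := by ring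
      _ ≤ 2 ^ ((k + 1) * (2 * j)) := pow_le_pow_right₀ one_le_two (by gcongr)
      _ = ((2 ^ 2) ^ (k + 1)) ^ j := by simp only [← pow_mul]; congr 1; ring
      _ = (4 ^ (k + 1)) ^ j := by norm_num
  calc x ≤ 2 ^ (k * m) / (4 ^ (k + 1)) ^ j := (le_div_iff₀ (by positivity)).2 h
    _ ≤ 2 ^ (k * m) / (2 ^ (k * m) * 2 ^ m) := by gcongr
    _ = (2 ^ m)⁻¹ := by field_simp
    _ ≤ y⁻¹ := by gcongr

end Parameters

section Threshold

variable {F V : Type*} [Field F] [Fintype F] [AddCommGroup V] [Module F V] [Fintype V]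

theorem bernoulliProb_inGeneralPosition_le_inv_card {p : ℝ} {m : ℕ} (hV : 2 ≤ finrank F V)
    (hq : 2 ^ (8 * finrank F V) ≤ Fintype.card F) (hp0 : 0 ≤ p) (hp1 : p ≤ 1)
    (hm : 16 * finrank F V * (Fintype.card F : ℝ) ^ (1 / (finrank F V : ℝ)) *
      Real.logb 2 (Fintype.card F) ^ 2 ≤ m)
    (hpm : 128 * (finrank F V + 1) * 4 ^ (2 * finrank F V + 4) *
      (p * (Fintype.card F : ℝ) ^ finrank F V * Real.logb 2 (Fintype.card F) ^ 2) ≤ m ^ 2) :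
    bernoulliProb V p (fun S ↦ ∃ P ⊆ S, InGeneralPosition F P ∧ m ≤ #P) ≤
      (Fintype.card F : ℝ)⁻¹ := by
  set d := finrank F V
  set q := Fintype.card F
  have hL : (8 * d : ℝ) ≤ Real.logb 2 q := by
    rw [Real.le_logb_iff_rpow_le one_lt_two (by exact_mod_cast Fintype.card_pos)]
    exact_mod_cast hq
  have hcard : Fintype.card V = q ^ d := Module.card_eq_pow_finrank
  by_cases hmq : m ≤ d * (q + 1)
  swap
  · refine (bernoulliProb_le_sum_pow (𝒰 := ∅) hp0 hp1 ?_).trans (by simp)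
    rintro S ⟨P, -, hP, hmP⟩
    exact absurd (hmP.trans (hP.card_le_finrank_mul (two_pos.trans_le hV))) hmq
  obtain ⟨t, j, T, hm_eq, ht, hT, htL, hj, hTt, hTlower, hTupper⟩ :=
    exists_fingerprint_parameters hV Fintype.card_pos hL hm hmq
  have hcount := bernoulliProb_inGeneralPosition_mul_pow_le (V := V) (j := j) (a := 4 ^ (2 * d + 4))
    hp0 hp1 (by positivity) hV hT hTt ht
    (by rw [hcard, Nat.cast_pow]; exact pow_mul_mul_exp_neg_le_one hV hq hp0 hp1 hTlower)
  rw [hcard, Nat.cast_pow] at hcount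
  have hq2 : 2 ≤ q := le_trans (le_self_pow₀ one_le_two (by omega)) hq
  have hqm : (q : ℝ) ≤ 2 ^ m := by
    rw [← pow_one (q : ℝ)]
    refine natCast_pow_le_two_pow Fintype.card_pos (le_trans ?_ htL)
    gcongr
    · exact le_trans (by positivity) hL
    · exact Nat.one_le_iff_ne_zero.2 ht
  refine le_inv_of_mul_four_pow_le (by positivity) hqm hj (k := 2 * d + 3) ?_
  rw [← hm_eq] at hpm hTupper htL ⊢
  exact hcount.trans <| pow_mul_one_add_pow_mul_pow_le (by omega) hq2 (by omega) (by positivity)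
    htL hTupper (by linarith)

variable {d : ℕ}

theorem bernoulliProb_isGenPos_le_inv_card {p X : ℝ} (hd : 2 ≤ d)
    (hq : 2 ^ (8 * d) ≤ Fintype.card F) (hp0 : 0 ≤ p) (hp1 : p ≤ 1)
    (hX : (Fintype.card F : ℝ) ^ (1 / (d : ℝ)) * Real.logb 2 (Fintype.card F) ^ 2 ≤ X)
    (hpX : p * (Fintype.card F : ℝ) ^ d * Real.logb 2 (Fintype.card F) ^ 2 ≤ X ^ 2) :
    bernoulliProb (Fin d → F) p (fun S ↦ ∃ P ⊆ S, IsGenPos F d (P : Set (Fin d → F)) ∧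
      16 * (d + 1) * 4 ^ (d + 2) * X ≤ #P) ≤ (Fintype.card F : ℝ)⁻¹ := by
  have hX0 : 0 ≤ X := le_trans (by positivity) hX
  have hceil := Nat.le_ceil (16 * (d + 1) * 4 ^ (d + 2) * X)
  set m := ⌈16 * (d + 1) * 4 ^ (d + 2) * X⌉₊
  have hm : 16 * d * (Fintype.card F : ℝ) ^ (1 / (d : ℝ)) *
      Real.logb 2 (Fintype.card F) ^ 2 ≤ m := by
    calc _ = 16 * d * 1 * ((Fintype.card F : ℝ) ^ (1 / (d : ℝ)) *
          Real.logb 2 (Fintype.card F) ^ 2) := by ring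
      _ ≤ 16 * (d + 1) * 4 ^ (d + 2) * X := by
        gcongr
        · linarith
        · exact one_le_pow₀ (by norm_num)
      _ ≤ m := hceil
  have hpm : 128 * (d + 1) * 4 ^ (2 * d + 4) *
      (p * (Fintype.card F : ℝ) ^ d * Real.logb 2 (Fintype.card F) ^ 2) ≤ (m : ℝ) ^ 2 := by
    calc _ ≤ 256 * (d + 1) ^ 2 * 4 ^ (2 * d + 4) * X ^ 2 := by
          gcongr
          · norm_num
          · exact le_self_pow₀ (by simp) two_ne_zero
      _ = (16 * (d + 1) * 4 ^ (d + 2) * X) ^ 2 := by ring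
      _ ≤ m ^ 2 := by gcongr
  have hfin : finrank F (Fin d → F) = d := finrank_fin_fun F
  refine le_trans ?_ (bernoulliProb_inGeneralPosition_le_inv_card (F := F) (V := Fin d → F)
    (by rwa [hfin]) (by rwa [hfin]) hp0 hp1 (by rwa [hfin]) (by rwa [hfin]))
  refine bernoulliProb_mono hp0 hp1 fun S ⟨P, hPS, hP, hPX⟩ ↦ ?_
  exact ⟨P, hPS, inGeneralPosition_of_isGenPos hP, Nat.ceil_le.2 hPX⟩

end Threshold

section Scales

variable {q L p : ℝ} {d : ℕ}

theorem sq_lower_scale (hd : d ≠ 0) (hq : 0 < q) :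
    (q ^ (1 / (d : ℝ)) * L ^ 2) ^ 2 = q ^ (-(d : ℝ) + 2 / d) * L ^ 2 * q ^ d * L ^ 2 := by
  have hpow : q ^ (-(d : ℝ) + 2 / d) * q ^ d = (q ^ (1 / (d : ℝ))) ^ 2 := by
    rw [← Real.rpow_natCast q d, ← Real.rpow_add hq, ← Real.rpow_mul_natCast hq.le]
    congr 1
    field_simp
    push_cast
    ring
  rw [mul_pow, ← hpow]
  ring

theorem sq_upper_scale (hp : 0 ≤ p) (hq : 0 ≤ q) :
    (p ^ ((1 : ℝ) / 2) * q ^ ((d : ℝ) / 2) * L) ^ 2 = p * q ^ d * L ^ 2 := by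
  rw [mul_pow, mul_pow, ← Real.rpow_mul_natCast hp, ← Real.rpow_mul_natCast hq, Nat.cast_two,
    div_mul_cancel₀ _ two_ne_zero, div_mul_cancel₀ _ two_ne_zero, Real.rpow_one, Real.rpow_natCast]

theorem lower_scale_le_upper_scale (hd : d ≠ 0) (hq : 0 < q) (hL : 0 ≤ L)
    (hp : q ^ (-(d : ℝ) + 2 / d) * L ^ 2 ≤ p) :
    q ^ (1 / (d : ℝ)) * L ^ 2 ≤ p ^ ((1 : ℝ) / 2) * q ^ ((d : ℝ) / 2) * L := by
  have hp0 : 0 ≤ p := le_trans (by positivity) hp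
  refine (sq_le_sq₀ (by positivity) (by positivity)).1 ?_
  rw [sq_lower_scale hd hq, sq_upper_scale hp0 hq.le]
  gcongr

end Scales

end RandomTuran

open RandomTuran in
theorem random_turan_upper_Fqd_low_range_general.{u} (d : ℕ) (hd : 2 ≤ d) :
    ∃ c : ℝ, 0 < c ∧ ∀ δ : ℝ, 0 < δ → ∃ Q : ℕ, ∀ q : ℕ, Q ≤ q →
      ∀ (F : Type u) [Field F] [Fintype F], Fintype.card F = q →
        ∀ p : ℝ, 0 ≤ p → p ≤ 1 →
          ((p ≤ (q : ℝ) ^ (-(d : ℝ) + 2 / (d : ℝ)) * (Real.logb 2 q) ^ 2 →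
            bernoulliProb (Fin d → F) p
              (fun S => ∃ T : Finset (Fin d → F), T ⊆ S ∧ IsGenPos F d ↑T ∧
                c * (q : ℝ) ^ ((1 : ℝ) / (d : ℝ)) * (Real.logb 2 q) ^ 2 ≤ (T.card : ℝ))
              ≤ δ) ∧
          ((q : ℝ) ^ (-(d : ℝ) + 2 / (d : ℝ)) * (Real.logb 2 q) ^ 2 ≤ p →
            bernoulliProb (Fin d → F) p
              (fun S => ∃ T : Finset (Fin d → F), T ⊆ S ∧ IsGenPos F d ↑T ∧
                c * p ^ ((1 : ℝ) / 2) * (q : ℝ) ^ ((d : ℝ) / 2) * Real.logb 2 q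
                  ≤ (T.card : ℝ)) ≤ δ)) := by
  refine ⟨16 * (d + 1) * 4 ^ (d + 2), by positivity, fun δ hδ ↦
    ⟨max (2 ^ (8 * d)) ⌈δ⁻¹⌉₊, fun q hQ F _ _ hF p hp0 hp1 ↦ ?_⟩⟩
  subst hF
  have hq := (le_max_left _ _).trans hQ
  have hq0 : (0 : ℝ) < Fintype.card F := by exact_mod_cast Fintype.card_pos
  have hδq : (Fintype.card F : ℝ)⁻¹ ≤ δ :=
    inv_le_of_inv_le₀ hδ (Nat.ceil_le.1 ((le_max_right _ _).trans hQ))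
  have hL : 0 ≤ Real.logb 2 (Fintype.card F) :=
    Real.logb_nonneg one_lt_two (by exact_mod_cast Fintype.card_pos)
  have hd0 : d ≠ 0 := by omega
  refine ⟨fun hp ↦ ?_, fun hp ↦ ?_⟩
  · have h := bernoulliProb_isGenPos_le_inv_card hd hq hp0 hp1 le_rfl
      (by rw [sq_lower_scale hd0 hq0]; gcongr)
    simpa only [← mul_assoc] using h.trans hδq
  · have h := bernoulliProb_isGenPos_le_inv_card hd hq hp0 hp1
      (lower_scale_le_upper_scale hd0 hq0 hL hp) (sq_upper_scale hp0 hq0.le).ge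
    simpa only [← mul_assoc] using h.trans hδq

/-- Upper bounds for the largest general position subset of a
`p`-random subset of `𝔽_q^d` in the two lower ranges of `p`. -/
theorem random_turan_upper_Fqd_low_range (d : ℕ) (hd : 2 ≤ d) :
    ∃ c : ℝ, 0 < c ∧ ∀ δ : ℝ, 0 < δ → ∃ Q : ℕ, ∀ q : ℕ, Q ≤ q → IsPrimePow q →
      ∀ (F : Type) [Field F] [Fintype F], Fintype.card F = q →
        ∀ p : ℝ, 0 ≤ p → p ≤ 1 →
          ((p ≤ (q : ℝ) ^ (-(d : ℝ) + 2 / (d : ℝ)) * (Real.logb 2 q) ^ 2 →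
            bernoulliProb (Fin d → F) p
              (fun S => ∃ T : Finset (Fin d → F), T ⊆ S ∧ IsGenPos F d ↑T ∧
                c * (q : ℝ) ^ ((1 : ℝ) / (d : ℝ)) * (Real.logb 2 q) ^ 2 ≤ (T.card : ℝ))
              ≤ δ) ∧
          ((q : ℝ) ^ (-(d : ℝ) + 2 / (d : ℝ)) * (Real.logb 2 q) ^ 2 ≤ p →
            p ≤ (q : ℝ) ^ (-(d : ℝ) + 2 * (d : ℝ) / ((d : ℝ) + 1)) *
              (Real.logb 2 q) ^ 2 →
            bernoulliProb (Fin d → F) p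
              (fun S => ∃ T : Finset (Fin d → F), T ⊆ S ∧ IsGenPos F d ↑T ∧
                c * p ^ ((1 : ℝ) / 2) * (q : ℝ) ^ ((d : ℝ) / 2) * Real.logb 2 q
                  ≤ (T.card : ℝ)) ≤ δ)) := by
  obtain ⟨c, hc, h⟩ := random_turan_upper_Fqd_low_range_general d hd
  exact ⟨c, hc, fun δ hδ ↦ (h δ hδ).imp fun Q hQ q hq _ F _ _ hF p hp0 hp1 ↦
    (hQ q hq F hF p hp0 hp1).imp_right fun hb hl _ ↦ hb hl⟩
end

section
/- For every integer d ≥ 3 there exists a constant c > 0 such that for every prime power q, every point set P ⊆ 𝔽_q^d of size at least c·q^{d−2} contains a critical coplanar (d+1)-tuple; that is, there exist d+1 points of P that are affinely dependent and such that every proper subset of these d+1 points is affinely independent. -/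
/-- A `(d+1)`-element subset of `𝔽_q^d` is critical coplanar if it is affinely dependent
(coplanar) while every proper subset of it is affinely independent. -/
def IsCriticalCoplanar (F : Type*) [Field F] (d : ℕ) (t : Finset (Fin d → F)) : Prop :=
  t.card = d + 1 ∧ ¬ AffineIndependent F ((↑) : t → (Fin d → F)) ∧
    ∀ s : Finset (Fin d → F), s ⊂ t → AffineIndependent F ((↑) : s → (Fin d → F))

/-!
Let `q` be the number of scalars and `d` the dimension, and call a flat of codimension two rich if
it contains more than `d * q ^ (d - 3)` of the given points. Everything rests on one observation: if
`s` consists of `d` independent points, then a point of the hyperplane spanned by `s` that avoids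
the `d` facets `affineSpan (s \ {i})` completes `s` to a critical tuple.

If some flat `A` is rich, two of the points off `A` lie in a common hyperplane through `A`, since
there are only `q + 1` such hyperplanes. Extend these two points to `s` by points of `A`. Each facet
of `s` contains a point off `A`, so it meets `A` in at most `q ^ (d - 3)` points, and some point of
`A` avoids all the facets.

If no flat is rich, choose `d - 1` independent points, and let `W` be their span. Some hyperplane
through `W` contains many points off `W`; let `s` consist of the `d - 1` points and one of these.
The facets of `s` have codimension two, so they are not rich and cannot cover the points of the
hyperplane.
-/

open Module Finset
open scoped LinearAlgebra.Projectivization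

section AffineSpace

variable {k V P : Type*} [Field k] [AddCommGroup V] [Module k V] [AddTorsor V P]

theorem affineIndependent_insert {s : Set P} {p : P}
    (hs : AffineIndependent k ((↑) : s → P)) (hp : p ∉ affineSpan k s) :
    AffineIndependent k ((↑) : ↥(insert p s) → P) := by
  have mem_of_ne (z : ↥(insert p s)) (hz : z ≠ ⟨p, Set.mem_insert p s⟩) : (z : P) ∈ s :=
    z.2.resolve_left fun h => hz (Subtype.ext h)
  refine AffineIndependent.affineIndependent_of_notMem_span (i := ⟨p, Set.mem_insert p s⟩) ?_ ?_
  · refine .of_set_of_injective (hs.mono ?_)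
      (Subtype.val_injective.comp Subtype.val_injective)
    rintro _ ⟨z, rfl⟩
    exact mem_of_ne z.1 z.2
  · refine fun h => hp (affineSpan_mono k ?_ h)
    rintro _ ⟨z, hz, rfl⟩
    exact mem_of_ne z hz

theorem finrank_direction_affineSpan_le {s : Finset P} {n : ℕ} (hs : #s ≤ n + 1) :
    finrank k (affineSpan k (s : Set P)).direction ≤ n := by
  rw [direction_affineSpan]
  rcases s.eq_empty_or_nonempty with rfl | hne
  · rw [coe_empty, vectorSpan_empty, finrank_bot]
    exact n.zero_le
  · have : Nonempty s := hne.to_subtype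
    have hle := finrank_vectorSpan_range_add_one_le k ((↑) : s → P)
    rw [Fintype.card_coe, Subtype.range_coe_subtype, Finset.setOfPred_mem] at hle
    omega

theorem finrank_direction_affineSpan_eq {s : Finset P} {n : ℕ}
    (hs : AffineIndependent k ((↑) : s → P)) (hcard : #s = n + 1) :
    finrank k (affineSpan k (s : Set P)).direction = n := by
  have h := hs.finrank_vectorSpan (n := n) (by rw [Fintype.card_coe, hcard])
  rwa [Subtype.range_coe_subtype, Finset.setOfPred_mem, ← direction_affineSpan] at h

theorem finrank_direction_affineSpan_sdiff_singleton {s : Finset P} {i : P} {n : ℕ}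
    (hs : AffineIndependent k ((↑) : s → P)) (hi : i ∈ s) (hcard : #s = n + 2) :
    finrank k (affineSpan k (s \ {i} : Set P)).direction = n := by
  classical
  rw [← coe_erase]
  exact finrank_direction_affineSpan_eq (hs.mono (coe_subset.2 (erase_subset i s)))
    (by rw [card_erase_of_mem hi, hcard, Nat.add_succ_sub_one])

theorem affineSpan_eq_of_finrank_direction_lt_card {s : Finset P} {H : AffineSubspace k P}
    [FiniteDimensional k H.direction] (hs : AffineIndependent k ((↑) : s → P))
    (hsH : (s : Set P) ⊆ H) (hH : finrank k H.direction < #s) :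
    affineSpan k (s : Set P) = H := by
  have hle : affineSpan k (s : Set P) ≤ H := affineSpan_le.2 hsH
  have hrank : finrank k (affineSpan k (s : Set P)).direction = #s - 1 :=
    finrank_direction_affineSpan_eq hs (by omega)
  refine AffineSubspace.eq_of_direction_eq_of_nonempty_of_le
    (Submodule.eq_of_le_of_finrank_le (AffineSubspace.direction_le hle) (by omega)) ?_ hle
  exact (card_pos.1 (Nat.zero_lt_of_lt hH)).to_set.mono (subset_affineSpan k _)

theorem exists_affineIndependent_superset {S s₀ : Finset P} {n : ℕ}
    (h₀ : AffineIndependent k ((↑) : s₀ → P)) (h₀S : s₀ ⊆ S) (hn : #s₀ ≤ n)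
    (h : ∀ s ⊆ S, s₀ ⊆ s → #s < n → ∃ p ∈ S, p ∉ affineSpan k (s : Set P)) :
    ∃ s ⊆ S, s₀ ⊆ s ∧ #s = n ∧ AffineIndependent k ((↑) : s → P) := by
  classical
  induction n, hn using Nat.le_induction with
  | base => exact ⟨s₀, h₀S, Subset.rfl, rfl, h₀⟩
  | succ n _ ih =>
    obtain ⟨s, hsS, hs₀, hcard, hs⟩ := ih fun s hsS hs₀ hlt => h s hsS hs₀ (by omega)
    obtain ⟨p, hpS, hp⟩ := h s hsS hs₀ (by omega)
    have hps : p ∉ s := fun hps => hp (mem_affineSpan k hps)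
    exact ⟨insert p s, insert_subset hpS hsS, hs₀.trans (subset_insert p s),
      by rw [card_insert_of_notMem hps, hcard],
      (affineIndependent_insert hs hp).mono (coe_insert p s).subset⟩

theorem mem_affineSpan_insert_of_mkQ_eq_smul {W : AffineSubspace k P} {w x y : P} {r : k}
    (hw : w ∈ W) (h : W.direction.mkQ (y -ᵥ w) = r • W.direction.mkQ (x -ᵥ w)) :
    y ∈ affineSpan k (insert x (W : Set P)) := by
  have hdir : y -ᵥ w - r • (x -ᵥ w) ∈ W.direction := by
    rwa [← map_smul, Submodule.mkQ_apply, Submodule.mkQ_apply, Submodule.Quotient.eq] at h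
  refine (AffineSubspace.mem_affineSpan_insert_iff hw x y).2
    ⟨r, _, AffineSubspace.vadd_mem_of_mem_direction hdir hw, ?_⟩
  rw [vadd_vadd, add_sub_cancel, vsub_vadd]

/-- The flats of dimension one more that contain `W` correspond to the points of
`ℙ k (V ⧸ W.direction)`. -/
theorem exists_lt_card_subset_affineSpan_insert {W : AffineSubspace k P}
    [Finite (ℙ k (V ⧸ W.direction))] (hW : (W : Set P).Nonempty) {S : Finset P} {N : ℕ}
    (hS : ∀ x ∈ S, x ∉ W) (hcard : Nat.card (ℙ k (V ⧸ W.direction)) * N < #S) :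
    ∃ x ∈ S, ∃ T ⊆ S, (T : Set P) ⊆ affineSpan k (insert x (W : Set P)) ∧ N < #T := by
  classical
  have := Fintype.ofFinite (ℙ k (V ⧸ W.direction))
  obtain ⟨w, hw⟩ := hW
  have mkQ_ne_zero (x : S) : W.direction.mkQ ((x : P) -ᵥ w) ≠ 0 := by
    rw [Ne, Submodule.mkQ_apply, Submodule.Quotient.mk_eq_zero,
      AffineSubspace.vsub_right_mem_direction_iff_mem hw]
    exact hS x x.2
  let f (x : S) : ℙ k (V ⧸ W.direction) := .mk k _ (mkQ_ne_zero x)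
  obtain ⟨ℓ, hℓ⟩ := Fintype.exists_lt_card_fiber_of_mul_lt_card f (n := N)
    (by rwa [Fintype.card_coe, ← Nat.card_eq_fintype_card])
  obtain ⟨x, hx⟩ := card_pos.1 (Nat.zero_lt_of_lt hℓ)
  refine ⟨x, x.2, ({y | f y = ℓ} : Finset S).map (.subtype (· ∈ S)), map_subtype_subset _, ?_,
    by rwa [card_map]⟩
  intro y hy
  obtain ⟨y, hyℓ, rfl⟩ := Finset.mem_map.1 (mem_coe.1 hy)
  have hxy : f y = f x := by rw [(mem_filter_univ y).1 hyℓ, (mem_filter_univ x).1 hx]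
  obtain ⟨r, hr⟩ := (Projectivization.mk_eq_mk_iff' _ _ _ _ _).1 hxy
  exact mem_affineSpan_insert_of_mkQ_eq_smul hw hr.symm

variable (k) in
/-- A circuit of the matroid of affine independence: a minimal affinely dependent set of points.
A critical coplanar tuple of a `d`-dimensional space is a circuit with `d + 1` points. -/
def IsAffineCircuit (t : Finset P) : Prop :=
  ¬ AffineIndependent k ((↑) : t → P) ∧ ∀ s ⊂ t, AffineIndependent k ((↑) : s → P)

theorem isAffineCircuit_insert [DecidableEq P] {s : Finset P} {p : P}
    (hs : AffineIndependent k ((↑) : s → P)) (hps : p ∉ s) (hp : p ∈ affineSpan k (s : Set P))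
    (hfacet : ∀ i ∈ s, p ∉ affineSpan k (s \ {i} : Set P)) :
    IsAffineCircuit k (insert p s) := by
  refine ⟨fun hind => ?_, fun u hu => ?_⟩
  · refine hind.notMem_affineSpan_sdiff ⟨p, mem_insert_self p s⟩ Set.univ
      (affineSpan_mono k (fun z hz => ?_) hp)
    exact ⟨⟨z, mem_insert_of_mem hz⟩,
      ⟨trivial, fun h => ne_of_mem_of_not_mem hz hps (congrArg Subtype.val h)⟩, rfl⟩
  · obtain ⟨j, hj, hju⟩ := exists_of_ssubset hu
    rcases mem_insert.1 hj with rfl | hjs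
    · have hus : u ⊆ s := (subset_insert_iff_of_notMem hju).1 hu.1
      exact hs.mono (coe_subset.2 hus)
    · have hfacet_ind : AffineIndependent k ((↑) : ↥(s \ {j} : Set P) → P) :=
        hs.mono Set.sdiff_subset
      refine (affineIndependent_insert hfacet_ind (hfacet j hjs)).mono fun z hz => ?_
      exact (mem_insert.1 (hu.1 hz)).imp_right fun hzs => ⟨hzs, ne_of_mem_of_not_mem hz hju⟩

theorem exists_isAffineCircuit_of_card_facet_le {S s T : Finset P} {N : ℕ}
    (hs : AffineIndependent k ((↑) : s → P)) (hs_one : 1 < #s) (hsS : s ⊆ S) (hTS : T ⊆ S)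
    (hT : (T : Set P) ⊆ affineSpan k (s : Set P))
    (hfacet : ∀ i ∈ s, ∀ U ⊆ T, (U : Set P) ⊆ affineSpan k (s \ {i} : Set P) → #U ≤ N)
    (hcard : #s * N < #T) :
    ∃ t ⊆ S, #t = #s + 1 ∧ IsAffineCircuit k t := by
  classical
  obtain ⟨p, hpT, hp⟩ : ∃ p ∈ T, ∀ i ∈ s, p ∉ affineSpan k (s \ {i} : Set P) := by
    by_contra! hcover
    have hsub : T ⊆ s.biUnion fun i => {p ∈ T | p ∈ affineSpan k (s \ {i} : Set P)} := by
      intro p hp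
      obtain ⟨i, hi, hpi⟩ := hcover p hp
      exact mem_biUnion.2 ⟨i, hi, mem_filter.2 ⟨hp, hpi⟩⟩
    have hle : #T ≤ #s * N := (card_le_card hsub).trans <| card_biUnion_le_card_mul _ _ _
      fun i hi => hfacet i hi _ (filter_subset _ _) fun _ hp => (mem_filter.1 hp).2
    omega
  have hps : p ∉ s := by
    intro hps
    obtain ⟨i, hi, hip⟩ := exists_mem_ne hs_one p
    exact hp i hi (mem_affineSpan k ⟨hps, hip.symm⟩)
  exact ⟨insert p s, insert_subset (hTS hpT) hsS, card_insert_of_notMem hps,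
    isAffineCircuit_insert hs hps (hT hpT) hp⟩

end AffineSpace

section FiniteField

variable {k V P : Type*} [Field k] [Finite k] [AddCommGroup V] [Module k V]
  [FiniteDimensional k V] [AddTorsor V P]

theorem card_le_pow_finrank_direction {T : Finset P} {A : AffineSubspace k P}
    (hT : (T : Set P) ⊆ A) : #T ≤ Nat.card k ^ finrank k A.direction := by
  rcases T.eq_empty_or_nonempty with rfl | ⟨p, hp⟩
  · simp
  have : Nonempty A := ⟨⟨p, hT hp⟩⟩
  have : Finite A.direction := Module.finite_of_finite k
  have : Finite A := .of_equiv _ (Equiv.vaddConst (⟨p, hT hp⟩ : A))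
  calc #T = (T : Set P).ncard := (Set.ncard_coe_finset T).symm
    _ ≤ (A : Set P).ncard := Set.ncard_le_ncard hT (Set.toFinite (A : Set P))
    _ = Nat.card A.direction := Nat.card_congr (Equiv.vaddConst (⟨p, hT hp⟩ : A)).symm
    _ = Nat.card k ^ finrank k A.direction := Module.natCard_eq_pow_finrank

theorem card_le_pow_of_subset_of_notMem {T : Finset P} {A G : AffineSubspace k P} {x : P} {n : ℕ}
    (hTA : (T : Set P) ⊆ A) (hTG : (T : Set P) ⊆ G) (hxG : x ∈ G) (hxA : x ∉ A)
    (hG : finrank k G.direction ≤ n + 1) : #T ≤ Nat.card k ^ n := by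
  rcases T.eq_empty_or_nonempty with rfl | ⟨p, hp⟩
  · simp
  have hlt : A ⊓ G < G := inf_lt_right.2 fun hGA => hxA (hGA hxG)
  have hrank : finrank k (A ⊓ G).direction ≤ n := Nat.le_of_lt_succ <|
    (Submodule.finrank_lt_finrank_of_lt
      (AffineSubspace.direction_lt_of_nonempty hlt ⟨p, hTA hp, hTG hp⟩)).trans_le hG
  calc #T ≤ Nat.card k ^ finrank k (A ⊓ G).direction :=
        card_le_pow_finrank_direction fun _ hz => ⟨hTA hz, hTG hz⟩
    _ ≤ Nat.card k ^ n := Nat.pow_le_pow_right Nat.card_pos hrank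

theorem exists_lt_card_subset_affineSpan_insert_of_codim_two {W : AffineSubspace k P}
    (hW : (W : Set P).Nonempty) (hcodim : finrank k V = finrank k W.direction + 2)
    {S : Finset P} {N : ℕ}
    (hcard : Nat.card k ^ finrank k W.direction + (Nat.card k + 1) * N < #S) :
    ∃ x ∈ S, x ∉ W ∧ ∃ T ⊆ S, (∀ y ∈ T, y ∉ W) ∧
      (T : Set P) ⊆ affineSpan k (insert x (W : Set P)) ∧ N < #T := by
  classical
  have hquot : finrank k (V ⧸ W.direction) = 2 := by
    have := Submodule.finrank_quotient_add_finrank W.direction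
    omega
  have : Finite (V ⧸ W.direction) := Module.finite_of_finite k
  have hon : #{p ∈ S | p ∈ W} ≤ Nat.card k ^ finrank k W.direction :=
    card_le_pow_finrank_direction fun _ hp => (mem_filter.1 hp).2
  have hoff : (Nat.card k + 1) * N < #{p ∈ S | p ∉ W} := by
    have := card_filter_add_card_filter_not (s := S) (· ∈ W)
    omega
  obtain ⟨x, hx, T, hT, hTspan, hTcard⟩ := exists_lt_card_subset_affineSpan_insert hW
    (fun p hp => (mem_filter.1 hp).2)
    ((Projectivization.card_of_finrank_two k _ hquot).symm ▸ hoff)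
  exact ⟨x, (mem_filter.1 hx).1, (mem_filter.1 hx).2, T, hT.trans (filter_subset _ _),
    fun y hy => (mem_filter.1 (hT hy)).2, hTspan, hTcard⟩

theorem exists_affineIndependent_superset_of_pow_lt_card {s₀ T : Finset P}
    {A : AffineSubspace k P} {x : P} {n : ℕ} (h₀ : AffineIndependent k ((↑) : s₀ → P))
    (h₀_card : #s₀ ≤ n + 3) (hx : x ∈ s₀) (hxA : x ∉ A) (hTA : (T : Set P) ⊆ A)
    (hT : Nat.card k ^ n < #T) :
    ∃ s : Finset P, s₀ ⊆ s ∧ (s : Set P) ⊆ s₀ ∪ T ∧ #s = n + 3 ∧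
      AffineIndependent k ((↑) : s → P) := by
  classical
  obtain ⟨s, hs_sub, h₀s, hs_card, hs⟩ :=
    exists_affineIndependent_superset (S := s₀ ∪ T) h₀ subset_union_left h₀_card (by
      intro s _ h₀s hs_card
      by_contra! hspan
      have hTspan : (T : Set P) ⊆ affineSpan k (s : Set P) :=
        fun z hz => hspan z (mem_union_right s₀ hz)
      exact hT.not_ge <| card_le_pow_of_subset_of_notMem hTA hTspan
        (mem_affineSpan k (h₀s hx)) hxA (finrank_direction_affineSpan_le (by omega)))
  exact ⟨s, h₀s, by exact_mod_cast hs_sub, hs_card, hs⟩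

theorem exists_isAffineCircuit_of_rich_flat {S T : Finset P} {A : AffineSubspace k P} {x y : P}
    {n : ℕ} (hTS : T ⊆ S) (hTA : (T : Set P) ⊆ A) (hA : finrank k A.direction ≤ n + 1)
    (hcard : (n + 3) * Nat.card k ^ n < #T) (hxS : x ∈ S) (hyS : y ∈ S) (hxA : x ∉ A)
    (hyA : y ∉ A) (hxy : x ≠ y) (hy : y ∈ affineSpan k (insert x (A : Set P))) :
    ∃ t ⊆ S, #t = n + 4 ∧ IsAffineCircuit k t := by
  classical
  have hpair : AffineIndependent k ((↑) : ({x, y} : Finset P) → P) := by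
    refine (affineIndependent_insert (s := {y}) (affineIndependent_of_subsingleton k _) ?_).mono
      (coe_pair (a := x)).subset
    rwa [AffineSubspace.mem_affineSpan_singleton]
  obtain ⟨s, hxys, hs_sub, hs_card, hs⟩ := exists_affineIndependent_superset_of_pow_lt_card
    (n := n) hpair (by rw [card_pair hxy]; omega) (mem_insert_self x _) hxA hTA
    (lt_of_le_of_lt (Nat.le_mul_of_pos_left _ (by omega)) hcard)
  obtain ⟨hxs, hys⟩ : x ∈ s ∧ y ∈ s := by
    simpa only [insert_subset_iff, singleton_subset_iff] using hxys
  have hsS : s ⊆ S := fun z hz => (hs_sub hz).elim (by grind) (@hTS z)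
  set H := affineSpan k (insert x (A : Set P)) with hH
  have hTH : (T : Set P) ⊆ H := fun z hz => mem_affineSpan k (Set.mem_insert_of_mem x (hTA hz))
  have hxyH : (({x, y} : Finset P) : Set P) ⊆ H := by
    rw [coe_pair]
    exact Set.pair_subset (mem_affineSpan k (Set.mem_insert x _)) hy
  have hHrank : finrank k H.direction ≤ n + 2 := by
    rw [hH, direction_affineSpan]
    exact (finrank_vectorSpan_insert_le A x).trans (Nat.succ_le_succ hA)
  have hsH : affineSpan k (s : Set P) = H := affineSpan_eq_of_finrank_direction_lt_card hs
    (hs_sub.trans (Set.union_subset hxyH hTH)) (by omega)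
  have hfacet (i : P) (hi : i ∈ s) (U : Finset P) (hUT : U ⊆ T)
      (hU : (U : Set P) ⊆ affineSpan k (s \ {i} : Set P)) : #U ≤ Nat.card k ^ n := by
    obtain ⟨z, hzs, hzi, hzA⟩ : ∃ z ∈ s, z ≠ i ∧ z ∉ A := by grind
    exact card_le_pow_of_subset_of_notMem ((coe_subset.2 hUT).trans hTA) hU
      (mem_affineSpan k ⟨hzs, hzi⟩) hzA
      (finrank_direction_affineSpan_sdiff_singleton hs hi hs_card).le
  rw [show n + 4 = #s + 1 by omega]
  exact exists_isAffineCircuit_of_card_facet_le hs (by omega) hsS hTS (hsH ▸ hTH) hfacet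
    (hs_card ▸ hcard)

theorem exists_isAffineCircuit_of_forall_flat_card_le {S : Finset P} {n M : ℕ}
    (hV : finrank k V = n + 3)
    (hM : ∀ A : AffineSubspace k P, finrank k A.direction = n + 1 →
      ∀ T ⊆ S, (T : Set P) ⊆ A → #T ≤ M)
    (hcard : Nat.card k ^ (n + 1) + (Nat.card k + 1) * ((n + 3) * M) < #S) :
    ∃ t ⊆ S, #t = n + 4 ∧ IsAffineCircuit k t := by
  classical
  obtain ⟨b, hbS, -, hb_card, hb⟩ := exists_affineIndependent_superset (k := k) (S := S) (s₀ := ∅)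
    (n := n + 2) (affineIndependent_of_subsingleton k _) (empty_subset S) (Nat.zero_le _) (by
      intro s _ _ hs_lt
      by_contra! hall
      have hle := card_le_pow_finrank_direction (k := k) (T := S) hall
      have := hle.trans (Nat.pow_le_pow_right Nat.card_pos
        (finrank_direction_affineSpan_le (k := k) (n := n + 1) (by omega)))
      omega)
  set W := affineSpan k (b : Set P) with hW
  have hWrank : finrank k W.direction = n + 1 := finrank_direction_affineSpan_eq hb hb_card
  have hWne : (W : Set P).Nonempty := by
    obtain ⟨w, hw⟩ := card_pos.1 (by omega : 0 < #b)
    exact ⟨w, mem_affineSpan k hw⟩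
  obtain ⟨x, hxS, hxW, T, hTS, -, hTH, hT_card⟩ :=
    exists_lt_card_subset_affineSpan_insert_of_codim_two hWne (by omega) (hWrank.symm ▸ hcard)
  have hxb : x ∉ b := fun hxb => hxW (mem_affineSpan k hxb)
  have hs : AffineIndependent k ((↑) : ↥(insert x b) → P) :=
    (affineIndependent_insert hb hxW).mono (coe_insert x b).subset
  have hs_card : #(insert x b) = n + 3 := by rw [card_insert_of_notMem hxb, hb_card]
  rw [show n + 4 = #(insert x b) + 1 by omega]
  refine exists_isAffineCircuit_of_card_facet_le hs (by omega) (insert_subset hxS hbS) hTS ?_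
    (fun i hi U hUT hU => hM _ (finrank_direction_affineSpan_sdiff_singleton hs hi hs_card) U
      (hUT.trans hTS) hU) (hs_card ▸ hT_card)
  rwa [hW, affineSpan_insert_affineSpan, ← coe_insert] at hTH

end FiniteField

theorem exists_critical_coplanar_tuple_general {F V P : Type*} [Field F] [Finite F]
    [AddCommGroup V] [Module F V] [AddTorsor V P] {d : ℕ} (hd : 3 ≤ d) (hV : finrank F V = d)
    {S : Finset P} (hS : (2 * d ^ 2 + 2) * Nat.card F ^ (d - 2) ≤ #S) :
    ∃ t ⊆ S, #t = d + 1 ∧ IsAffineCircuit F t := by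
  obtain ⟨n, rfl⟩ : ∃ n, d = n + 3 := ⟨d - 3, by omega⟩
  have : FiniteDimensional F V := .of_finrank_pos (by omega)
  set q := Nat.card F
  have hq : 1 < q := Finite.one_lt_card
  have hqn : q ≤ q * q ^ n := Nat.le_mul_of_pos_right q (by positivity)
  have hS' : (2 * (n + 3) ^ 2 + 2) * (q * q ^ n) ≤ #S := by rwa [← pow_succ']
  by_cases hpoor : ∀ A : AffineSubspace F P, finrank F A.direction = n + 1 →
      ∀ T ⊆ S, (T : Set P) ⊆ A → #T ≤ (n + 3) * q ^ n
  · have hcard : q ^ (n + 1) + (q + 1) * ((n + 3) * ((n + 3) * q ^ n)) < #S := by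
      rw [pow_succ']
      nlinarith
    exact exists_isAffineCircuit_of_forall_flat_card_le hV hpoor hcard
  · push Not at hpoor
    obtain ⟨A, hA, T, hTS, hTA, hT⟩ := hpoor
    have hA_nonempty : (A : Set P).Nonempty :=
      (card_pos.1 (Nat.zero_lt_of_lt hT)).to_set.mono hTA
    have hcard : q ^ finrank F A.direction + (q + 1) * 1 < #S := by
      rw [hA, pow_succ']
      nlinarith
    obtain ⟨x, hxS, hxA, U, hUS, hUA, hUspan, hU⟩ :=
      exists_lt_card_subset_affineSpan_insert_of_codim_two hA_nonempty (by omega) hcard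
    obtain ⟨y, hyU, hyx⟩ := exists_mem_ne hU x
    exact exists_isAffineCircuit_of_rich_flat hTS hTA hA.le hT hxS (hUS hyU) hxA (hUA y hyU)
      hyx.symm (hUspan hyU)

/-- For every `d ≥ 3`, every point set `P ⊆ 𝔽_q^d` of size at least
`c·q^{d−2}` contains a critical coplanar `(d+1)`-tuple. -/
theorem exists_critical_coplanar_tuple (d : ℕ) (hd : 3 ≤ d) :
    ∃ c : ℝ, 0 < c ∧ ∀ q : ℕ, IsPrimePow q →
      ∀ (F : Type) [Field F] [Fintype F], Fintype.card F = q →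
        ∀ P : Finset (Fin d → F), c * (q : ℝ) ^ (d - 2) ≤ (P.card : ℝ) →
          ∃ t : Finset (Fin d → F), t ⊆ P ∧ IsCriticalCoplanar F d t := by
  refine ⟨2 * d ^ 2 + 2, by positivity, fun q _ F _ _ hq P hP => ?_⟩
  rw [← hq, ← Nat.card_eq_fintype_card] at hP
  exact exists_critical_coplanar_tuple_general hd (finrank_fin_fun F) (by exact_mod_cast hP)
end
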